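/- arXiv:1108.5415 — 2 statements merged into one kernel-verified Lean document; each statement's English description precedes it below -/
import Mathlib

section
/- Fix C > 23 and set a = (2/11)(C + 18.25). Suppose n > max(4096, (2/11)C + 75/11) and n/log n > 6(2a−13)(a−7)/(2a−15). Let (X_t) be the Gibbs sampler on M_n started from an arbitrary deterministic point X_0 = x ∈ M_n. Then for every integer T > C·n·log n, ‖L(X_T) − U_n‖_TV ≤ 11·n^{−C/11 + 19/44}. -/
/-!
Project a matrix to its first column, a vector in `[0, 2]^n` with sum `n`; a step resamples two
coordinates uniformly in the interval allowed by their sum. Two copies driven by the same pairs and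
the same `λ` contract in expected squared `ℓ²` distance by `1 - 2 / (3 n)` per step. This brings
them close but never together.

For the last `T₂` steps condition on the pairs and read them backwards, growing a set of infected
rows from a single row: a pair meeting the set in one row infects the other. The two copies may
differ exactly on the set infected so far. Forwards in time this set shrinks by one row at each
infecting step, where a maximal coupling of two uniform laws on intervals makes the copies agree on
the row that leaves, at a cost of (`ℓ¹` distance) / (interval length). At the end they differ in at
most one row, hence not at all, since their sums are equal. If the infection has reached every row,
which fails with probability at most `n² exp (-T₂ / n)`, nothing is required of the copies at the
start of this stage. Intervals shorter than `η` have stationary probability at most `2 η`.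

Both stages are phrased dually, as inequalities between iterates of the transition operator on
`[0, ∞]`-valued test functions, so no coupling of the two chains is ever constructed as a measure.
-/

open MeasureTheory

noncomputable section

/-- Uniform probability measure on a finset. -/
def unifOn {α : Type*} [MeasurableSpace α] (s : Finset α) : Measure α :=
  (s.card : ENNReal)⁻¹ • ∑ a ∈ s, Measure.dirac a

/-- Total variation distance between two measures. -/
def tvDist {α : Type*} [MeasurableSpace α] (μ ν : Measure α) : ℝ :=
  ⨆ A : {A : Set α // MeasurableSet A}, ((μ A).toReal - (ν A).toReal)

/-- The set `M_n` of nonnegative `n × 2` matrices with row sums `2` and column sums `n`. -/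
def MSet (n : ℕ) : Set (Fin n × Fin 2 → ℝ) :=
  {x | (∀ p, 0 ≤ x p) ∧ (∀ i : Fin n, x (i, 0) + x (i, 1) = 2) ∧
    (∀ j : Fin 2, ∑ i : Fin n, x (i, j) = n)}

/-- The uniform (normalized `(n-1)`-dimensional Hausdorff) measure on `M_n`. -/
def UM (n : ℕ) : Measure (Fin n × Fin 2 → ℝ) :=
  (μH[(n : ℝ) - 1] (MSet n))⁻¹ • (μH[(n : ℝ) - 1]).restrict (MSet n)

/-- One step of the Gibbs sampler on `M_n`, updating the pair of rows `u.1 = (i, j)`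
using the uniform variable `u.2 = λ`. -/
def stepM (n : ℕ) (x : Fin n × Fin 2 → ℝ) (u : (Fin n × Fin n) × ℝ) :
    Fin n × Fin 2 → ℝ := fun p =>
  let i := u.1.1
  let j := u.1.2
  let l := u.2
  let d := 2 - x (i, 0) - x (j, 0)
  if p = (i, 0) then (if 0 ≤ d then l * (2 - d) else 2 * l - (1 - l) * d)
  else if p = (j, 0) then (if 0 ≤ d then (1 - l) * (2 - d) else 2 * (1 - l) - l * d)
  else if p = (i, 1) then (if 0 ≤ d then 2 * (1 - l) + l * d else (1 - l) * (2 + d))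
  else if p = (j, 1) then (if 0 ≤ d then 2 * l + (1 - l) * d else l * (2 + d))
  else x p

/-- The set of ordered pairs `(i, j)` with `i < j`. -/
def pairsF (n : ℕ) : Finset (Fin n × Fin n) := Finset.univ.filter fun p => p.1 < p.2

/-- Law of the random update datum: `(i, j)` uniform among pairs `i < j`, and
`λ` uniform on `[0,1]`. -/
def driveM (n : ℕ) : Measure ((Fin n × Fin n) × ℝ) :=
  (unifOn (pairsF n)).prod ((volume : Measure ℝ).restrict (Set.Icc 0 1))

/-- Law of the Gibbs sampler on `M_n` after `T` steps started at `x`. -/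
def lawM (n : ℕ) (x : Fin n × Fin 2 → ℝ) (T : ℕ) : Measure (Fin n × Fin 2 → ℝ) :=
  Measure.map (fun ω : Fin T → (Fin n × Fin n) × ℝ => (List.ofFn ω).foldl (stepM n) x)
    (Measure.pi fun _ => driveM n)

/-- Law of the `(T+1)`-step path of the Gibbs sampler on `M_n` with initial distribution `μ`. -/
def pathM (n T : ℕ) (μ : Measure (Fin n × Fin 2 → ℝ)) :
    Measure (Fin (T + 1) → Fin n × Fin 2 → ℝ) :=
  Measure.map (fun p : (Fin n × Fin 2 → ℝ) × (Fin T → (Fin n × Fin n) × ℝ) =>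
      fun s : Fin (T + 1) => ((List.ofFn p.2).take s).foldl (stepM n) p.1)
    (μ.prod (Measure.pi fun _ => driveM n))

section MarkovOperator

variable {α β : Type*} [MeasurableSpace α]

/-- The operator `f ↦ E[f (step · U)]`, `U ∼ ν`, of the Markov chain driven by the random map
`step`, acting on `[0, ∞]`-valued test functions. -/
def transitionOp (ν : Measure α) (step : β → α → β) (f : β → ENNReal) (x : β) : ENNReal :=
  ∫⁻ u, f (step x u) ∂ν

theorem measurable_transitionOp [MeasurableSpace β] {ν : Measure α} [SFinite ν]
    {step : β → α → β} (hstep : Measurable (Function.uncurry step)) {f : β → ENNReal}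
    (hf : Measurable f) : Measurable (transitionOp ν step f) :=
  (hf.comp hstep).lintegral_prod_right'

theorem measurable_transitionOp_iterate [MeasurableSpace β] {ν : Measure α} [SFinite ν]
    {step : β → α → β} (hstep : Measurable (Function.uncurry step)) {f : β → ENNReal}
    (hf : Measurable f) (T : ℕ) : Measurable ((transitionOp ν step)^[T] f) := by
  induction T with
  | zero => exact hf
  | succ T ih =>
    rw [Function.iterate_succ_apply']
    exact measurable_transitionOp hstep ih

theorem lintegral_pi_succ (ν : Measure α) [SigmaFinite ν] (T : ℕ) {g : (Fin (T + 1) → α) → ENNReal}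
    (hg : Measurable g) :
    ∫⁻ ω, g ω ∂Measure.pi (fun _ => ν) =
      ∫⁻ u, ∫⁻ ω, g (Fin.cons u ω) ∂Measure.pi (fun _ => ν) ∂ν := by
  rw [← (measurePreserving_piFinSuccAbove (fun _ => ν) 0).symm.lintegral_comp hg, lintegral_prod]
  · simp only [MeasurableEquiv.piFinSuccAbove_symm_apply, Fin.insertNthEquiv, Equiv.coe_fn_mk,
      Fin.insertNth_zero']
  · exact (hg.comp (MeasurableEquiv.measurable _)).aemeasurable

theorem measurable_foldl_ofFn [MeasurableSpace β] {step : β → α → β}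
    (hstep : Measurable (Function.uncurry step)) (T : ℕ) :
    Measurable fun p : β × (Fin T → α) => (List.ofFn p.2).foldl step p.1 := by
  induction T with
  | zero => simpa using measurable_fst
  | succ T ih =>
    simp only [List.ofFn_succ, List.foldl_cons]
    have hfirst : Measurable fun p : β × (Fin (T + 1) → α) => step p.1 (p.2 0) :=
      hstep.comp (measurable_fst.prodMk ((measurable_pi_apply 0).comp measurable_snd))
    have hrest : Measurable fun p : β × (Fin (T + 1) → α) => fun i : Fin T => p.2 i.succ := by
      fun_prop
    exact ih.comp (hfirst.prodMk hrest)

theorem lintegral_foldl_ofFn [MeasurableSpace β] (ν : Measure α) [SigmaFinite ν]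
    {step : β → α → β} (hstep : Measurable (Function.uncurry step)) {f : β → ENNReal}
    (hf : Measurable f) (T : ℕ) (x : β) :
    ∫⁻ ω : Fin T → α, f ((List.ofFn ω).foldl step x) ∂Measure.pi (fun _ => ν) =
      (transitionOp ν step)^[T] f x := by
  induction T generalizing x with
  | zero => simp
  | succ T ih =>
    have hm : Measurable fun ω : Fin (T + 1) → α => f ((List.ofFn ω).foldl step x) :=
      hf.comp ((measurable_foldl_ofFn hstep _).comp measurable_prodMk_left)
    rw [lintegral_pi_succ ν T hm, Function.iterate_succ_apply']
    simp only [List.ofFn_succ, Fin.cons_zero, Fin.cons_succ, List.foldl_cons, ih]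
    rfl

end MarkovOperator

section UniformAndTotalVariation

variable {α : Type*} [MeasurableSpace α]

theorem lintegral_unifOn [MeasurableSingletonClass α] (s : Finset α) (g : α → ENNReal) :
    ∫⁻ a, g a ∂unifOn s = (s.card : ENNReal)⁻¹ * ∑ a ∈ s, g a := by
  simp [unifOn]

theorem lintegral_unifOn_ofReal [MeasurableSingletonClass α] {s : Finset α} (hs : s.Nonempty)
    {g : α → ℝ} (hg : ∀ a ∈ s, 0 ≤ g a) :
    ∫⁻ a, ENNReal.ofReal (g a) ∂unifOn s = ENNReal.ofReal ((s.card : ℝ)⁻¹ * ∑ a ∈ s, g a) := by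
  have hcard : (0 : ℝ) < s.card := by exact_mod_cast hs.card_pos
  rw [lintegral_unifOn, ENNReal.ofReal_mul (by positivity), ENNReal.ofReal_sum_of_nonneg hg,
    ENNReal.ofReal_inv_of_pos hcard, ENNReal.ofReal_natCast]

theorem ae_unifOn_mem [MeasurableSingletonClass α] (s : Finset α) : ∀ᵐ a ∂unifOn s, a ∈ s := by
  rw [ae_iff]
  simp +contextual [unifOn]

theorem isProbabilityMeasure_unifOn {s : Finset α} (hs : s.Nonempty) :
    IsProbabilityMeasure (unifOn s) := by
  refine ⟨?_⟩
  simp [unifOn, ENNReal.inv_mul_cancel, hs.ne_empty]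

theorem tvDist_le {μ ν : Measure α} [IsFiniteMeasure ν] {c : ℝ} (hc : 0 ≤ c)
    (h : ∀ A, MeasurableSet A → μ A ≤ ν A + ENNReal.ofReal c) : tvDist μ ν ≤ c := by
  have : Nonempty {A : Set α // MeasurableSet A} := ⟨⟨∅, .empty⟩⟩
  refine ciSup_le fun ⟨A, hA⟩ => ?_
  have hle := ENNReal.toReal_mono (by finiteness) (h A hA)
  rw [ENNReal.toReal_add (by finiteness) (by finiteness), ENNReal.toReal_ofReal hc] at hle
  exact sub_le_iff_le_add'.2 hle

end UniformAndTotalVariation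

section Pairs

variable {n : ℕ}

theorem ne_of_mem_pairsF {e : Fin n × Fin n} (he : e ∈ pairsF n) : e.1 ≠ e.2 :=
  (Finset.mem_filter.1 he).2.ne

theorem two_mul_sum_pairsF (F : Fin n → Fin n → ℝ) (hF : ∀ i j, F i j = F j i) :
    2 * ∑ e ∈ pairsF n, F e.1 e.2 = (∑ i, ∑ j, F i j) - ∑ i, F i i := by
  have hlt : ∑ e ∈ pairsF n, F e.1 e.2 = ∑ i, ∑ j, if i < j then F i j else 0 := by
    rw [pairsF, Finset.sum_filter, Fintype.sum_prod_type]
  have hgt : ∑ e ∈ pairsF n, F e.1 e.2 = ∑ i, ∑ j, if j < i then F i j else 0 := by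
    rw [hlt, Finset.sum_comm]
    exact Finset.sum_congr rfl fun i _ => Finset.sum_congr rfl fun j _ => by rw [hF]
  have hsplit : ∀ i j, F i j = (if i < j then F i j else 0) + (if j < i then F i j else 0) +
      if i = j then F i j else 0 := by
    intro i j
    rcases lt_trichotomy i j with h | rfl | h
    · simp [h, h.not_gt, h.ne]
    · simp
    · simp [h, h.not_gt, h.ne']
  have htotal : ∑ i, ∑ j, F i j =
      ∑ e ∈ pairsF n, F e.1 e.2 + ∑ e ∈ pairsF n, F e.1 e.2 + ∑ i, F i i := by
    nth_rw 1 [hlt]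
    rw [hgt]
    calc ∑ i, ∑ j, F i j = ∑ i, ∑ j, ((if i < j then F i j else 0) +
          (if j < i then F i j else 0) + if i = j then F i j else 0) :=
          Finset.sum_congr rfl fun i _ => Finset.sum_congr rfl fun j _ => hsplit i j
      _ = _ := by simp [Finset.sum_add_distrib]
  linarith

theorem card_pairsF (n : ℕ) : ((pairsF n).card : ℝ) = n * (n - 1) / 2 := by
  have h := two_mul_sum_pairsF (n := n) (fun _ _ => 1) fun _ _ => rfl
  simp only [Finset.sum_const, Finset.card_univ, Fintype.card_fin, nsmul_eq_mul, mul_one] at h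
  linarith

theorem ae_driveM (n : ℕ) : ∀ᵐ u ∂driveM n, u.1.1 ≠ u.1.2 ∧ u.2 ∈ Set.Icc (0 : ℝ) 1 := by
  have hpair : ∀ᵐ u ∂driveM n, u.1 ∈ pairsF n :=
    Measure.quasiMeasurePreserving_fst.ae (ae_unifOn_mem _)
  have hunit : ∀ᵐ u ∂driveM n, u.2 ∈ Set.Icc (0 : ℝ) 1 :=
    Measure.quasiMeasurePreserving_snd.ae (ae_restrict_mem measurableSet_Icc)
  filter_upwards [hpair, hunit] with u h₁ h₂ using ⟨ne_of_mem_pairsF h₁, h₂⟩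

variable (n) [hn : n.AtLeastTwo]

theorem pairsF_nonempty : (pairsF n).Nonempty :=
  ⟨(⟨0, by have := hn.prop; omega⟩, ⟨1, hn.prop⟩),
    Finset.mem_filter.2 ⟨Finset.mem_univ _, Fin.mk_lt_mk.2 one_pos⟩⟩

instance : IsProbabilityMeasure (unifOn (pairsF n)) :=
  isProbabilityMeasure_unifOn (pairsF_nonempty n)

instance : IsProbabilityMeasure ((volume : Measure ℝ).restrict (Set.Icc 0 1)) :=
  ⟨by simp⟩

instance : IsProbabilityMeasure (driveM n) :=
  inferInstanceAs (IsProbabilityMeasure (Measure.prod _ _))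

end Pairs

section Endpoints

/-- Left endpoint of the interval of values `u ∈ [0, 2]` with `s - u ∈ [0, 2]`. -/
def loEnd (s : ℝ) : ℝ := max 0 (s - 2)

/-- Right endpoint of the interval of values `u ∈ [0, 2]` with `s - u ∈ [0, 2]`. -/
def hiEnd (s : ℝ) : ℝ := min 2 s

theorem mem_Icc_loEnd_hiEnd {s u : ℝ} :
    u ∈ Set.Icc (loEnd s) (hiEnd s) ↔ u ∈ Set.Icc (0 : ℝ) 2 ∧ s - u ∈ Set.Icc (0 : ℝ) 2 := by
  simp only [loEnd, hiEnd, Set.mem_Icc, max_le_iff, le_min_iff]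
  constructor <;> rintro ⟨⟨_, _⟩, _, _⟩ <;> refine ⟨⟨?_, ?_⟩, ?_, ?_⟩ <;> linarith

theorem loEnd_add_hiEnd (s : ℝ) : loEnd s + hiEnd s = s := by
  rw [loEnd, hiEnd, ← sub_self 2, max_sub_sub_right, sub_add_eq_add_sub, add_comm,
    min_add_max]
  ring

theorem monotone_loEnd : Monotone loEnd := fun _ _ h => max_le_max le_rfl (by linarith)

theorem monotone_hiEnd : Monotone hiEnd := fun _ _ h => min_le_min le_rfl h

theorem abs_loEnd_sub_add_abs_hiEnd_sub (s t : ℝ) :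
    |loEnd s - loEnd t| + |hiEnd s - hiEnd t| = |s - t| := by
  wlog h : t ≤ s generalizing s t
  · simpa only [abs_sub_comm] using this t s (le_of_not_ge h)
  rw [abs_of_nonneg (sub_nonneg.2 (monotone_loEnd h)),
    abs_of_nonneg (sub_nonneg.2 (monotone_hiEnd h)), abs_of_nonneg (sub_nonneg.2 h)]
  linarith [loEnd_add_hiEnd s, loEnd_add_hiEnd t]

theorem loEnd_sub_mul_hiEnd_sub_nonneg (s t : ℝ) :
    0 ≤ (loEnd s - loEnd t) * (hiEnd s - hiEnd t) := by
  rcases le_total s t with h | h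
  · exact mul_nonneg_of_nonpos_of_nonpos (sub_nonpos.2 (monotone_loEnd h))
      (sub_nonpos.2 (monotone_hiEnd h))
  · exact mul_nonneg (sub_nonneg.2 (monotone_loEnd h)) (sub_nonneg.2 (monotone_hiEnd h))

@[fun_prop]
theorem measurable_loEnd : Measurable loEnd := by unfold loEnd; fun_prop

@[fun_prop]
theorem measurable_hiEnd : Measurable hiEnd := by unfold hiEnd; fun_prop

variable {ι : Type*}

/-- Length of the interval of values available to coordinate `i` when the coordinates `i` and `j`
are redistributed. -/
def pairWidth (i j : ι) (x : ι → ℝ) : ℝ := hiEnd (x i + x j) - loEnd (x i + x j)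

theorem pairWidth_comm (i j : ι) (x : ι → ℝ) : pairWidth j i x = pairWidth i j x := by
  rw [pairWidth, pairWidth, add_comm]

theorem measurable_pairWidth (i j : ι) : Measurable (pairWidth i j) := by
  unfold pairWidth
  fun_prop

end Endpoints

section PairUpdate

variable {ι : Type*} [DecidableEq ι] {x y : ι → ℝ} {i j k : ι}

/-- The vector `x` with `x i` replaced by `u` and `x j` by `x i + x j - u`, which for `i ≠ j`
keeps the sum of the coordinates. -/
def setPair (x : ι → ℝ) (i j : ι) (u : ℝ) : ι → ℝ :=
  Function.update (Function.update x j (x i + x j - u)) i u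

@[simp]
theorem setPair_left (x : ι → ℝ) (i j : ι) (u : ℝ) : setPair x i j u i = u :=
  Function.update_self ..

theorem setPair_right (x : ι → ℝ) (hij : i ≠ j) (u : ℝ) : setPair x i j u j = x i + x j - u := by
  simp [setPair, hij.symm]

theorem setPair_of_ne (x : ι → ℝ) (hi : k ≠ i) (hj : k ≠ j) (u : ℝ) : setPair x i j u k = x k := by
  simp [setPair, hi, hj]

theorem setPair_comm (x : ι → ℝ) (hij : i ≠ j) (u : ℝ) :
    setPair x j i (x i + x j - u) = setPair x i j u := by
  rw [setPair, setPair, Function.update_comm hij]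
  congr 2
  ring

theorem setPair_eq_add_smul (x : ι → ℝ) (hij : i ≠ j) (u : ℝ) :
    setPair x i j u = x + (u - x i) • (Pi.single i 1 - Pi.single j 1) := by
  ext k
  by_cases hi : k = i
  · subst hi
    simp [hij]
  by_cases hj : k = j
  · subst hj
    simp [setPair_right x hij, hij.symm]
    ring
  · simp [setPair_of_ne x hi hj, hi, hj]

/-- One Gibbs step on first columns: the coordinates `u.1 = (i, j)` are redistributed, the new
value of `i` being at the fraction `u.2` of its interval of admissible values. -/
def pairStep (x : ι → ℝ) (u : (ι × ι) × ℝ) : ι → ℝ :=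
  setPair x u.1.1 u.1.2 (loEnd (x u.1.1 + x u.1.2) + u.2 * pairWidth u.1.1 u.1.2 x)

theorem pairStep_swap (x : ι → ℝ) (hij : i ≠ j) (l : ℝ) :
    pairStep x ((j, i), 1 - l) = pairStep x ((i, j), l) := by
  simp only [pairStep]
  rw [← setPair_comm x hij, pairWidth_comm i j]
  congr 1
  rw [add_comm (x j) (x i), pairWidth]
  linarith [loEnd_add_hiEnd (x i + x j)]

theorem measurable_pairStep (e : ι × ι) :
    Measurable fun p : (ι → ℝ) × ℝ => pairStep p.1 (e, p.2) := by
  have hu : Measurable fun p : (ι → ℝ) × ℝ =>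
      loEnd (p.1 e.1 + p.1 e.2) + p.2 * pairWidth e.1 e.2 p.1 := by
    unfold pairWidth
    fun_prop
  unfold pairStep setPair
  rw [measurable_pi_iff]
  intro k
  simp only [Function.update_apply]
  exact .ite (.const _) hu (.ite (.const _) (by fun_prop) (by fun_prop))

theorem measurable_uncurry_pairStep [Countable ι] [MeasurableSpace ι]
    [MeasurableSingletonClass ι] : Measurable (Function.uncurry (pairStep (ι := ι))) := by
  have h : Measurable fun q : (ι × ι) × ((ι → ℝ) × ℝ) => pairStep q.2.1 (q.1, q.2.2) :=
    measurable_from_prod_countable_right measurable_pairStep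
  exact h.comp
    (by fun_prop : Measurable fun p : (ι → ℝ) × ((ι × ι) × ℝ) => (p.2.1, (p.1, p.2.2)))

end PairUpdate

section Slice

variable {ι : Type*} [Fintype ι] {x y : ι → ℝ} {i j : ι}

/-- The vectors with entries in `[0, 2]` and mean `1`: the first columns of narrow matrices. -/
def slice (ι : Type*) [Fintype ι] : Set (ι → ℝ) :=
  {x | (∀ i, x i ∈ Set.Icc (0 : ℝ) 2) ∧ ∑ i, x i = Fintype.card ι}

theorem measurableSet_slice : MeasurableSet (slice ι) := by
  have hbox : MeasurableSet (Set.univ.pi fun _ : ι => Set.Icc (0 : ℝ) 2) :=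
    .univ_pi fun _ => measurableSet_Icc
  have hsum : MeasurableSet {x : ι → ℝ | ∑ i, x i = Fintype.card ι} :=
    measurableSet_eq_fun (by fun_prop) measurable_const
  convert hbox.inter hsum using 1
  ext x
  simp [slice, Pi.le_def, forall_and]

theorem mem_Icc_of_mem_slice (hx : x ∈ slice ι) (i j : ι) :
    x i ∈ Set.Icc (loEnd (x i + x j)) (hiEnd (x i + x j)) :=
  mem_Icc_loEnd_hiEnd.2 ⟨hx.1 i, by simpa using hx.1 j⟩

theorem pairWidth_nonneg (hx : x ∈ slice ι) (i j : ι) : 0 ≤ pairWidth i j x :=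
  sub_nonneg.2 ((mem_Icc_of_mem_slice hx i j).1.trans (mem_Icc_of_mem_slice hx i j).2)

theorem sum_add_pair {f g : ι → ℝ} (hij : i ≠ j) (h : ∀ k, k ≠ i → k ≠ j → f k = g k) :
    ∑ k, f k + (g i + g j) = ∑ k, g k + (f i + f j) := by
  classical
  rw [← Finset.sum_add_sum_compl {i, j} f, ← Finset.sum_add_sum_compl {i, j} g,
    Finset.sum_pair hij, Finset.sum_pair hij, Finset.sum_congr rfl fun k hk => ?_]
  · ring
  · simp only [Finset.mem_compl, Finset.mem_insert, Finset.mem_singleton, not_or] at hk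
    exact h k hk.1 hk.2

variable [DecidableEq ι]

theorem sum_setPair (x : ι → ℝ) (hij : i ≠ j) (u : ℝ) : ∑ k, setPair x i j u k = ∑ k, x k := by
  have h := sum_add_pair hij fun k hi hj => setPair_of_ne x hi hj u
  rw [setPair_left, setPair_right x hij] at h
  linarith

theorem setPair_mem_slice_iff (hx : x ∈ slice ι) (hij : i ≠ j) {u : ℝ} :
    setPair x i j u ∈ slice ι ↔ u ∈ Set.Icc (loEnd (x i + x j)) (hiEnd (x i + x j)) := by
  rw [mem_Icc_loEnd_hiEnd]
  refine ⟨fun h => ⟨by simpa using h.1 i, by simpa [setPair_right x hij] using h.1 j⟩,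
    fun ⟨hi, hj⟩ => ⟨fun k => ?_, (sum_setPair x hij u).trans hx.2⟩⟩
  by_cases hki : k = i
  · simpa [hki] using hi
  by_cases hkj : k = j
  · simpa [hkj, setPair_right x hij] using hj
  · simpa [setPair_of_ne x hki hkj] using hx.1 k

theorem pairStep_mem_slice (hx : x ∈ slice ι) (hij : i ≠ j) {l : ℝ} (hl : l ∈ Set.Icc (0 : ℝ) 1) :
    pairStep x ((i, j), l) ∈ slice ι := by
  refine (setPair_mem_slice_iff hx hij).2 ?_
  have hw := pairWidth_nonneg hx i j
  constructor
  · exact le_add_of_nonneg_right (mul_nonneg hl.1 hw)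
  · calc loEnd (x i + x j) + l * pairWidth i j x ≤ loEnd (x i + x j) + pairWidth i j x := by
          gcongr
          exact mul_le_of_le_one_left hw hl.2
      _ = hiEnd (x i + x j) := by rw [pairWidth]; ring

end Slice

section FirstColumn

variable {n : ℕ}

/-- The `n × 2` matrix with first column `x` and row sums `2`. -/
def ofFirstCol (x : Fin n → ℝ) : Fin n × Fin 2 → ℝ :=
  fun p => if p.2 = 0 then x p.1 else 2 - x p.1

@[simp]
theorem ofFirstCol_zero (x : Fin n → ℝ) (i : Fin n) : ofFirstCol x (i, 0) = x i := by
  simp [ofFirstCol]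

@[simp]
theorem ofFirstCol_one (x : Fin n → ℝ) (i : Fin n) : ofFirstCol x (i, 1) = 2 - x i := by
  simp [ofFirstCol]

theorem isometry_ofFirstCol : Isometry (ofFirstCol (n := n)) := by
  refine Isometry.of_dist_eq fun x y => le_antisymm ?_ ?_
  · refine (dist_pi_le_iff dist_nonneg).2 fun ⟨i, c⟩ => ?_
    fin_cases c
    · simpa using dist_le_pi_dist x y i
    · exact ((IsometryEquiv.subLeft (2 : ℝ)).dist_eq _ _).trans_le (dist_le_pi_dist x y i)
  · exact (dist_pi_le_iff dist_nonneg).2 fun i => by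
      simpa using dist_le_pi_dist (ofFirstCol x) (ofFirstCol y) (i, 0)

theorem ofFirstCol_mem_MSet_iff {x : Fin n → ℝ} : ofFirstCol x ∈ MSet n ↔ x ∈ slice (Fin n) := by
  simp only [MSet, slice, Set.mem_ofPred_eq, Prod.forall, Fin.forall_fin_two, ofFirstCol_zero,
    ofFirstCol_one, sub_nonneg, Set.mem_Icc, add_sub_cancel, implies_true, true_and,
    Fintype.card_fin, Finset.sum_sub_distrib, Finset.sum_const, Finset.card_univ, nsmul_eq_mul]
  refine and_congr_right fun _ => ⟨And.left, fun h => ⟨h, by linarith⟩⟩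

theorem image_ofFirstCol_slice : ofFirstCol '' slice (Fin n) = MSet n := by
  refine subset_antisymm (Set.image_subset_iff.2 fun x => ofFirstCol_mem_MSet_iff.2) fun z hz => ?_
  have hcol : ofFirstCol (fun i => z (i, 0)) = z := by
    ext ⟨i, c⟩
    fin_cases c
    · simp
    · simp [← hz.2.1 i]
  exact ⟨_, ofFirstCol_mem_MSet_iff.1 (hcol.symm ▸ hz), hcol⟩

theorem stepM_ofFirstCol (x : Fin n → ℝ) {u : (Fin n × Fin n) × ℝ} (hu : u.1.1 ≠ u.1.2) :
    stepM n (ofFirstCol x) u = ofFirstCol (pairStep x u) := by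
  obtain ⟨⟨i, j⟩, l⟩ := u
  have hij : i ≠ j := hu
  have hends : (0 ≤ 2 - x i - x j ∧ loEnd (x i + x j) = 0 ∧ hiEnd (x i + x j) = x i + x j) ∨
      (¬ 0 ≤ 2 - x i - x j ∧ loEnd (x i + x j) = x i + x j - 2 ∧ hiEnd (x i + x j) = 2) := by
    by_cases h : 0 ≤ 2 - x i - x j
    · exact .inl ⟨h, max_eq_left (by linarith), min_eq_right (by linarith)⟩
    · exact .inr ⟨h, max_eq_right (by linarith), min_eq_left (by linarith)⟩
  ext ⟨k, c⟩
  by_cases hki : k = i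
  · subst hki
    rcases hends with ⟨h, hlo, hhi⟩ | ⟨h, hlo, hhi⟩ <;> fin_cases c <;>
      simp [stepM, pairStep, pairWidth, h, hlo, hhi, hij, -mul_eq_mul_left_iff] <;> ring
  by_cases hkj : k = j
  · subst hkj
    rcases hends with ⟨h, hlo, hhi⟩ | ⟨h, hlo, hhi⟩ <;> fin_cases c <;>
      simp [stepM, pairStep, pairWidth, setPair_right x hij, h, hlo, hhi, hij.symm] <;> ring
  · fin_cases c <;> simp [stepM, pairStep, setPair_of_ne x hki hkj, hki, hkj]

theorem measurable_stepM (n : ℕ) : Measurable (Function.uncurry (stepM n)) := by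
  have h : Measurable fun q : (Fin n × Fin n) × ((Fin n × Fin 2 → ℝ) × ℝ) =>
      stepM n q.2.1 (q.1, q.2.2) := by
    refine measurable_from_prod_countable_right fun e => measurable_pi_lambda _ fun k => ?_
    have hs : MeasurableSet {q : (Fin n × Fin 2 → ℝ) × ℝ | 0 ≤ 2 - q.1 (e.1, 0) - q.1 (e.2, 0)} :=
      measurableSet_le measurable_const (by fun_prop)
    simp only [stepM]
    refine .ite (.const _) (.ite hs ?_ ?_) <| .ite (.const _) (.ite hs ?_ ?_) <|
      .ite (.const _) (.ite hs ?_ ?_) <| .ite (.const _) (.ite hs ?_ ?_) ?_ <;> fun_prop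
  exact h.comp (by fun_prop :
    Measurable fun p : (Fin n × Fin 2 → ℝ) × ((Fin n × Fin n) × ℝ) => (p.2.1, (p.1, p.2.2)))

end FirstColumn

section GibbsOperator

variable {n : ℕ}

/-- Transition operator of the Gibbs sampler, read on first columns. -/
def gibbsOp (n : ℕ) : ((Fin n → ℝ) → ENNReal) → (Fin n → ℝ) → ENNReal :=
  transitionOp (driveM n) pairStep

theorem transitionOp_stepM_comp_ofFirstCol (f : (Fin n × Fin 2 → ℝ) → ENNReal) :
    transitionOp (driveM n) (stepM n) f ∘ ofFirstCol = gibbsOp n (f ∘ ofFirstCol) := by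
  ext x
  refine lintegral_congr_ae ?_
  filter_upwards [ae_driveM n] with u hu
  rw [stepM_ofFirstCol x hu.1, Function.comp_apply]

theorem lintegral_lawM_ofFirstCol [n.AtLeastTwo] (x : Fin n → ℝ) (T : ℕ)
    {f : (Fin n × Fin 2 → ℝ) → ENNReal} (hf : Measurable f) :
    ∫⁻ z, f z ∂lawM n (ofFirstCol x) T = (gibbsOp n)^[T] (f ∘ ofFirstCol) x := by
  have hsemi : Function.Semiconj (· ∘ ofFirstCol) (transitionOp (driveM n) (stepM n)) (gibbsOp n) :=
    transitionOp_stepM_comp_ofFirstCol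
  have hfold : Measurable fun ω : Fin T → (Fin n × Fin n) × ℝ =>
      (List.ofFn ω).foldl (stepM n) (ofFirstCol x) :=
    (measurable_foldl_ofFn (measurable_stepM n) T).comp measurable_prodMk_left
  rw [lawM, lintegral_map hf hfold, lintegral_foldl_ofFn _ (measurable_stepM n) hf]
  exact congrFun (hsemi.iterate_right T f) x

variable {ι : Type*} [DecidableEq ι]

/-- Average of `f` over the uniform redistribution of the two coordinates of the pair `e`. -/
def resample (e : ι × ι) (f : (ι → ℝ) → ENNReal) (x : ι → ℝ) : ENNReal :=
  ∫⁻ l in Set.Icc (0 : ℝ) 1, f (pairStep x (e, l))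

theorem measurable_resample (e : ι × ι) {f : (ι → ℝ) → ENNReal} (hf : Measurable f) :
    Measurable (resample e f) :=
  (hf.comp (measurable_pairStep e)).lintegral_prod_right'

theorem resample_swap (f : (ι → ℝ) → ENNReal) {i j : ι} (hij : i ≠ j) :
    resample (j, i) f = resample (i, j) f := by
  ext x
  have hflip : MeasurePreserving (fun l : ℝ => 1 - l) (volume.restrict (Set.Icc 0 1))
      (volume.restrict (Set.Icc 0 1)) := by
    have h := (Measure.measurePreserving_sub_left (volume : Measure ℝ) 1).restrict_preimage
      (measurableSet_Icc (a := (0 : ℝ)) (b := 1))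
    simpa using h
  have hemb : MeasurableEmbedding fun l : ℝ => 1 - l :=
    (Homeomorph.subLeft (1 : ℝ)).measurableEmbedding
  rw [resample, ← hflip.lintegral_comp_emb hemb]
  simp only [pairStep_swap x hij]
  rfl

theorem resample_le_one {f : (ι → ℝ) → ENNReal} (hf : ∀ x, f x ≤ 1) (e : ι × ι) (x : ι → ℝ) :
    resample e f x ≤ 1 :=
  (lintegral_mono fun _ => hf _).trans (by simp)

theorem gibbsOp_apply [n.AtLeastTwo] {f : (Fin n → ℝ) → ENNReal} (hf : Measurable f)
    (x : Fin n → ℝ) : gibbsOp n f x = ∫⁻ e, resample e f x ∂unifOn (pairsF n) := by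
  exact lintegral_prod _
    (hf.comp (measurable_uncurry_pairStep.comp measurable_prodMk_left)).aemeasurable

theorem measurable_gibbsOp_iterate [n.AtLeastTwo] {f : (Fin n → ℝ) → ENNReal} (hf : Measurable f)
    (T : ℕ) : Measurable ((gibbsOp n)^[T] f) :=
  measurable_transitionOp_iterate measurable_uncurry_pairStep hf T

theorem resample_add (e : ι × ι) {f : (ι → ℝ) → ENNReal} (hf : Measurable f)
    (g : (ι → ℝ) → ENNReal) : resample e (f + g) = resample e f + resample e g := by
  ext x
  exact lintegral_add_left (f := fun l => f (pairStep x (e, l)))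
    (hf.comp ((measurable_pairStep e).comp measurable_prodMk_left)) _

theorem resample_add_const (e : ι × ι) {f : (ι → ℝ) → ENNReal} (hf : Measurable f)
    (b : ENNReal) (x : ι → ℝ) : resample e (fun z => f z + b) x = resample e f x + b := by
  have hconst : resample e (fun _ => b) x = b := by simp [resample]
  rw [← hconst, ← Pi.add_apply, ← resample_add e hf, hconst]
  rfl

/-- Average of `f` over the redistribution of the pairs of `w`, the head of `w` coming first. -/
def resampleList (w : List (ι × ι)) (f : (ι → ℝ) → ENNReal) : (ι → ℝ) → ENNReal :=
  w.foldr resample f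

theorem measurable_resampleList {f : (ι → ℝ) → ENNReal} (hf : Measurable f) (w : List (ι × ι)) :
    Measurable (resampleList w f) := by
  induction w with
  | nil => exact hf
  | cons e w ih => exact measurable_resample e ih

theorem resampleList_le_one {f : (ι → ℝ) → ENNReal} (hf : ∀ x, f x ≤ 1) (w : List (ι × ι))
    (x : ι → ℝ) : resampleList w f x ≤ 1 := by
  induction w generalizing x with
  | nil => exact hf x
  | cons e w ih => exact resample_le_one ih e x

theorem gibbsOp_iterate_apply [n.AtLeastTwo] {f : (Fin n → ℝ) → ENNReal} (hf : Measurable f)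
    (T : ℕ) (x : Fin n → ℝ) :
    (gibbsOp n)^[T] f x =
      ∫⁻ ω : Fin T → Fin n × Fin n, resampleList (List.ofFn ω) f x
        ∂Measure.pi fun _ => unifOn (pairsF n) := by
  induction T generalizing x with
  | zero => simp [resampleList]
  | succ T ih =>
    rw [Function.iterate_succ_apply', gibbsOp_apply (measurable_gibbsOp_iterate hf T),
      lintegral_pi_succ _ T (measurable_of_finite _)]
    refine lintegral_congr fun e => ?_
    have hm : Measurable fun p : ℝ × (Fin T → Fin n × Fin n) =>
        resampleList (List.ofFn p.2) f (pairStep x (e, p.1)) :=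
      measurable_from_prod_countable_left fun ω =>
        (measurable_resampleList hf (List.ofFn ω)).comp
          ((measurable_pairStep e).comp measurable_prodMk_left)
    simp only [resample, ih, List.ofFn_succ, Fin.cons_zero, Fin.cons_succ]
    exact lintegral_lintegral_swap hm.aemeasurable

end GibbsOperator

section LineIntegral

variable {E : Type*} [AddCommGroup E] [Module ℝ E]

/-- Integral of `f` over the part inside `S` of the line through `x` with direction `v`. -/
def lineIntegral (S : Set E) (v : E) (f : E → ENNReal) (x : E) : ENNReal :=
  ∫⁻ t : ℝ, S.indicator f (x + t • v)

theorem lineIntegral_add_smul (S : Set E) (v : E) (f : E → ENNReal) (x : E) (t : ℝ) :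
    lineIntegral S v f (x + t • v) = lineIntegral S v f x := by
  simp only [lineIntegral, add_assoc, ← add_smul]
  exact lintegral_add_left_eq_self (fun s => S.indicator f (x + s • v)) t

variable [MeasurableSpace E] [MeasurableAdd₂ E]

theorem setLIntegral_lineIntegral_inv_mul_translate (μ : Measure E) [μ.IsAddRightInvariant]
    {S : Set E} (hS : MeasurableSet S) (v : E) (f : E → ENNReal) (t : ℝ) :
    ∫⁻ x in S, (lineIntegral S v 1 x)⁻¹ * S.indicator f (x + t • v) ∂μ =
      ∫⁻ x in S, (lineIntegral S v 1 x)⁻¹ * f x * S.indicator 1 (x + -t • v) ∂μ := by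
  rw [← lintegral_indicator hS, ← lintegral_indicator hS,
    ← lintegral_add_right_eq_self _ (-t • v)]
  refine lintegral_congr fun x => ?_
  have hback : x + -t • v + t • v = x := by module
  by_cases h₁ : x ∈ S <;> by_cases h₂ : x + -t • v ∈ S <;>
    simp only [Set.indicator, h₁, h₂, hback, lineIntegral_add_smul, if_true, if_false, mul_zero,
      Pi.one_apply, mul_one]

variable [MeasurableSMul₂ ℝ E]

theorem measurable_lineIntegral {S : Set E} (hS : MeasurableSet S) (v : E) {f : E → ENNReal}
    (hf : Measurable f) : Measurable (lineIntegral S v f) :=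
  Measurable.lintegral_prod_right' (f := fun p : E × ℝ => S.indicator f (p.1 + p.2 • v))
    ((hf.indicator hS).comp (by fun_prop))

theorem setLIntegral_lineIntegral (μ : Measure E) [μ.IsAddRightInvariant] {S : Set E}
    (hS : MeasurableSet S) [SFinite (μ.restrict S)] (v : E) {f : E → ENNReal} (hf : Measurable f) :
    ∫⁻ x in S, (lineIntegral S v 1 x)⁻¹ * lineIntegral S v f x ∂μ =
      ∫⁻ x in S, (lineIntegral S v 1 x)⁻¹ * lineIntegral S v 1 x * f x ∂μ := by
  have hc : Measurable fun x => (lineIntegral S v 1 x)⁻¹ :=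
    (measurable_lineIntegral hS v measurable_one).inv
  have hforward : Measurable fun p : E × ℝ =>
      (lineIntegral S v 1 p.1)⁻¹ * S.indicator f (p.1 + p.2 • v) :=
    (hc.comp measurable_fst).mul ((hf.indicator hS).comp (by fun_prop))
  have hbackward : Measurable fun p : E × ℝ =>
      (lineIntegral S v 1 p.1)⁻¹ * f p.1 * S.indicator 1 (p.1 + -p.2 • v) :=
    ((hc.mul hf).comp measurable_fst).mul ((measurable_one.indicator hS).comp (by fun_prop))
  calc ∫⁻ x in S, (lineIntegral S v 1 x)⁻¹ * lineIntegral S v f x ∂μ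
      = ∫⁻ x in S, (∫⁻ t : ℝ, (lineIntegral S v 1 x)⁻¹ * S.indicator f (x + t • v)) ∂μ :=
        lintegral_congr fun x => (lintegral_const_mul _
          ((hf.indicator hS).comp (by fun_prop))).symm
    _ = ∫⁻ t : ℝ, (∫⁻ x in S, (lineIntegral S v 1 x)⁻¹ * S.indicator f (x + t • v) ∂μ) :=
        lintegral_lintegral_swap hforward.aemeasurable
    _ = ∫⁻ t : ℝ, (∫⁻ x in S, (lineIntegral S v 1 x)⁻¹ * f x * S.indicator 1 (x + -t • v) ∂μ) :=
        lintegral_congr fun t => setLIntegral_lineIntegral_inv_mul_translate μ hS v f t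
    _ = ∫⁻ x in S, (∫⁻ t : ℝ, (lineIntegral S v 1 x)⁻¹ * f x * S.indicator 1 (x + -t • v)) ∂μ :=
        (lintegral_lintegral_swap hbackward.aemeasurable).symm
    _ = ∫⁻ x in S, (lineIntegral S v 1 x)⁻¹ * lineIntegral S v 1 x * f x ∂μ := by
        refine lintegral_congr fun x => ?_
        have hline : Measurable fun t : ℝ => S.indicator (1 : E → ENNReal) (x + -t • v) :=
          (measurable_one.indicator hS).comp (by fun_prop)
        rw [lintegral_const_mul _ hline,
          lintegral_neg_eq_self (fun t : ℝ => S.indicator 1 (x + t • v)), mul_right_comm]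
        rfl

end LineIntegral

section ResampleAverage

variable {ι : Type*} [DecidableEq ι] {x : ι → ℝ} {i j : ι}

theorem setLIntegral_Icc_affine (F : ℝ → ENNReal) (a : ℝ) {b : ℝ} (hb : 0 < b) :
    ∫⁻ l in Set.Icc (0 : ℝ) 1, F (a + l * b) =
      (ENNReal.ofReal b)⁻¹ * ∫⁻ u in Set.Icc a (a + b), F u := by
  have himage : (fun l => a + l * b) '' Set.Icc (0 : ℝ) 1 = Set.Icc a (a + b) := by
    simpa [mul_comm, add_comm] using Set.image_affine_Icc' hb a 0 1
  have hderiv : ∀ l ∈ Set.Icc (0 : ℝ) 1,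
      HasDerivWithinAt (fun l => a + l * b) b (Set.Icc 0 1) l := fun l _ => by
    simpa using (((hasDerivAt_id l).mul_const b).const_add a).hasDerivWithinAt
  have hinj : Set.InjOn (fun l => a + l * b) (Set.Icc 0 1) :=
    (add_right_injective a).comp (mul_left_injective₀ hb.ne') |>.injOn
  rw [← himage, lintegral_image_eq_lintegral_abs_deriv_mul measurableSet_Icc hderiv hinj,
    abs_of_pos hb, lintegral_const_mul' _ _ ENNReal.ofReal_ne_top, ← mul_assoc,
    ENNReal.inv_mul_cancel (by simpa using hb) ENNReal.ofReal_ne_top, one_mul]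

theorem resample_eq_average (f : (ι → ℝ) → ENNReal) (hw : 0 < pairWidth i j x) :
    resample (i, j) f x = (ENNReal.ofReal (pairWidth i j x))⁻¹ *
      ∫⁻ u in Set.Icc (loEnd (x i + x j)) (hiEnd (x i + x j)), f (setPair x i j u) := by
  have h := setLIntegral_Icc_affine (fun u => f (setPair x i j u)) (loEnd (x i + x j)) hw
  rwa [pairWidth, add_sub_cancel] at h

theorem setPair_self (hij : i ≠ j) : setPair x i j (x i) = x := by
  simp [setPair_eq_add_smul x hij]

variable [Fintype ι]

theorem resample_of_pairWidth_eq_zero (f : (ι → ℝ) → ENNReal) (hx : x ∈ slice ι) (hij : i ≠ j)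
    (hw : pairWidth i j x = 0) : resample (i, j) f x = f x := by
  have hi := mem_Icc_of_mem_slice hx i j
  have hlo : loEnd (x i + x j) = x i :=
    le_antisymm hi.1 (hi.2.trans_eq (sub_eq_zero.1 hw))
  simp [resample, pairStep, hw, hlo, setPair_self hij]

theorem lineIntegral_slice (f : (ι → ℝ) → ENNReal) (hx : x ∈ slice ι) (hij : i ≠ j) :
    lineIntegral (slice ι) (Pi.single i 1 - Pi.single j 1) f x =
      ∫⁻ u in Set.Icc (loEnd (x i + x j)) (hiEnd (x i + x j)), f (setPair x i j u) := by
  rw [lineIntegral, ← lintegral_sub_right_eq_self _ (x i), ← lintegral_indicator measurableSet_Icc]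
  refine lintegral_congr fun u => ?_
  simp only [← setPair_eq_add_smul x hij, Set.indicator, setPair_mem_slice_iff hx hij]

theorem lineIntegral_slice_one (hx : x ∈ slice ι) (hij : i ≠ j) :
    lineIntegral (slice ι) (Pi.single i 1 - Pi.single j 1) 1 x =
      ENNReal.ofReal (pairWidth i j x) := by
  simp [lineIntegral_slice 1 hx hij, pairWidth]

theorem resample_eq_lineIntegral (f : (ι → ℝ) → ENNReal) (hx : x ∈ slice ι) (hij : i ≠ j) :
    resample (i, j) f x =
      (lineIntegral (slice ι) (Pi.single i 1 - Pi.single j 1) 1 x)⁻¹ *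
        lineIntegral (slice ι) (Pi.single i 1 - Pi.single j 1) f x +
      {x | pairWidth i j x = 0}.indicator f x := by
  rw [lineIntegral_slice_one hx hij, lineIntegral_slice f hx hij]
  rcases (pairWidth_nonneg hx i j).eq_or_lt with hw | hw
  · have hnull : volume (Set.Icc (loEnd (x i + x j)) (hiEnd (x i + x j))) = 0 := by
      rw [Real.volume_Icc, ← pairWidth, ← hw, ENNReal.ofReal_zero]
    rw [resample_of_pairWidth_eq_zero f hx hij hw.symm, setLIntegral_measure_zero _ _ hnull,
      mul_zero, zero_add]
    simp [← hw]
  · simp [resample_eq_average f hw, hw.ne']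

theorem setLIntegral_resample (μ : Measure (ι → ℝ)) [μ.IsAddRightInvariant]
    [SFinite (μ.restrict (slice ι))] (hij : i ≠ j) {f : (ι → ℝ) → ENNReal} (hf : Measurable f) :
    ∫⁻ x in slice ι, resample (i, j) f x ∂μ = ∫⁻ x in slice ι, f x ∂μ := by
  set v : ι → ℝ := Pi.single i 1 - Pi.single j 1
  have hZ : Measurable ({x | pairWidth i j x = 0}.indicator f) :=
    hf.indicator (measurableSet_eq_fun (measurable_pairWidth i j) measurable_const)
  calc ∫⁻ x in slice ι, resample (i, j) f x ∂μ
      = ∫⁻ x in slice ι, (lineIntegral (slice ι) v 1 x)⁻¹ * lineIntegral (slice ι) v f x +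
          {x | pairWidth i j x = 0}.indicator f x ∂μ :=
        setLIntegral_congr_fun measurableSet_slice fun x hx => resample_eq_lineIntegral f hx hij
    _ = ∫⁻ x in slice ι, (lineIntegral (slice ι) v 1 x)⁻¹ * lineIntegral (slice ι) v 1 x * f x +
          {x | pairWidth i j x = 0}.indicator f x ∂μ := by
        rw [lintegral_add_right _ hZ, setLIntegral_lineIntegral μ measurableSet_slice v hf,
          ← lintegral_add_right _ hZ]
    _ = ∫⁻ x in slice ι, f x ∂μ := by
        refine setLIntegral_congr_fun measurableSet_slice fun x hx => ?_
        simp only [v, lineIntegral_slice_one hx hij]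
        rcases (pairWidth_nonneg hx i j).eq_or_lt with hw | hw
        · simp [← hw]
        · simp [hw.ne', ENNReal.inv_mul_cancel, hw]

end ResampleAverage

section UniformMeasure

variable {n : ℕ}

/-- The uniform law on `slice (Fin n)`: normalized `(n - 1)`-dimensional Hausdorff measure. -/
def uniformSlice (n : ℕ) : Measure (Fin n → ℝ) :=
  (μH[(n : ℝ) - 1] (slice (Fin n)))⁻¹ • (μH[(n : ℝ) - 1]).restrict (slice (Fin n))

theorem ae_mem_slice (n : ℕ) : ∀ᵐ x ∂uniformSlice n, x ∈ slice (Fin n) :=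
  Measure.ae_smul_measure (ae_restrict_mem measurableSet_slice) _

theorem hausdorffMeasure_slice_ne_top (m : ℕ) : μH[m] (slice (Fin (m + 1))) ≠ ⊤ := by
  set lift : (Fin m → ℝ) → Fin (m + 1) → ℝ := fun z => Fin.cons (m + 1 - ∑ i, z i) z
  have hlift : LipschitzWith (max m 1) lift := by
    refine LipschitzWith.of_dist_le_mul fun x y => ?_
    refine (dist_pi_le_iff (by positivity)).2 <| Fin.forall_fin_succ.2 ⟨?_, fun i => ?_⟩
    · calc dist (lift x 0) (lift y 0) = dist (∑ i, x i) (∑ i, y i) :=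
            (IsometryEquiv.subLeft ((m : ℝ) + 1)).dist_eq _ _
        _ ≤ ∑ i, dist (x i) (y i) := dist_sum_sum_le _ _ _
        _ ≤ ∑ _i : Fin m, dist x y := Finset.sum_le_sum fun i _ => dist_le_pi_dist x y i
        _ = m * dist x y := by simp
        _ ≤ (max m 1 : NNReal) * dist x y := by gcongr; simp
    · calc dist (x i) (y i) ≤ 1 * dist x y := by simpa using dist_le_pi_dist x y i
        _ ≤ (max m 1 : NNReal) * dist x y := by gcongr; simp
  have hsub : slice (Fin (m + 1)) ⊆ lift '' Set.Icc 0 2 := by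
    refine fun x hx => ⟨Fin.tail x, ⟨fun i => (hx.1 _).1, fun i => (hx.1 _).2⟩, ?_⟩
    have hzero : (m : ℝ) + 1 - ∑ i, Fin.tail x i = x 0 := by
      have hsum := hx.2
      rw [Fin.sum_univ_succ, Fintype.card_fin, Nat.cast_succ] at hsum
      exact sub_eq_of_eq_add hsum.symm
    simp only [lift, hzero, Fin.cons_self_tail]
  refine ne_top_of_le_ne_top ?_ <|
    (measure_mono hsub).trans (hlift.hausdorffMeasure_image_le (by positivity) _)
  have hvol : (μH[m] : Measure (Fin m → ℝ)) = volume := by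
    simpa using hausdorffMeasure_pi_real (ι := Fin m)
  rw [hvol]
  exact ENNReal.mul_ne_top (by finiteness) isCompact_Icc.measure_lt_top.ne

theorem hausdorffMeasure_slice_ne_zero (m : ℕ) : μH[m] (slice (Fin (m + 1))) ≠ 0 := by
  have htail : LipschitzWith 1 (Fin.tail : (Fin (m + 1) → ℝ) → Fin m → ℝ) :=
    LipschitzWith.of_dist_le_mul fun x y => by
      rw [NNReal.coe_one, one_mul]
      exact (dist_pi_le_iff dist_nonneg).2 fun i => dist_le_pi_dist x y i.succ
  set r : ℝ := 1 / (m + 1)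
  have hr : 0 < r := by positivity
  have hmr : m * r + r = 1 := by simp only [r]; field_simp
  have hsub : Set.Icc (fun _ => 1 - r) (fun _ => 1 + r) ⊆ Fin.tail '' slice (Fin (m + 1)) := by
    rintro z ⟨hlo, hhi⟩
    have hsum_ge : m * (1 - r) ≤ ∑ i, z i := by
      simpa [mul_sub] using Finset.sum_le_sum fun i (_ : i ∈ Finset.univ) => hlo i
    have hsum_le : ∑ i, z i ≤ m * (1 + r) := by
      simpa [mul_add, Finset.sum_add_distrib] using
        Finset.sum_le_sum fun i (_ : i ∈ Finset.univ) => hhi i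
    have hr1 : r ≤ 1 := by linarith [show 0 ≤ m * r by positivity]
    refine ⟨Fin.cons (m + 1 - ∑ i, z i) z, ⟨Fin.forall_fin_succ.2 ⟨?_, fun i => ?_⟩, ?_⟩, rfl⟩
    · constructor <;> simp only [Fin.cons_zero] <;> linarith
    · exact ⟨by simpa using (sub_nonneg.2 hr1).trans (hlo i),
        by simpa using (hhi i).trans (by linarith)⟩
    · simp [Fin.sum_univ_succ]
  have hvol : (μH[m] : Measure (Fin m → ℝ)) = volume := by
    simpa using hausdorffMeasure_pi_real (ι := Fin m)
  intro hzero
  have hle := (measure_mono hsub).trans (htail.hausdorffMeasure_image_le m.cast_nonneg _)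
  rw [hzero, mul_zero, hvol, Real.volume_Icc_pi, nonpos_iff_eq_zero, Finset.prod_eq_zero_iff] at hle
  obtain ⟨i, -, hi⟩ := hle
  linarith [ENNReal.ofReal_eq_zero.1 hi]

section

variable [NeZero n]

theorem hausdorffMeasure_slice_ne_zero_ne_top :
    μH[(n : ℝ) - 1] (slice (Fin n)) ≠ 0 ∧ μH[(n : ℝ) - 1] (slice (Fin n)) ≠ ⊤ := by
  obtain ⟨m, rfl⟩ := Nat.exists_eq_succ_of_ne_zero (NeZero.ne n)
  rw [Nat.cast_succ, add_sub_cancel_right]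
  exact ⟨hausdorffMeasure_slice_ne_zero m, hausdorffMeasure_slice_ne_top m⟩

instance : IsProbabilityMeasure (uniformSlice n) := by
  refine ⟨?_⟩
  rw [uniformSlice, Measure.smul_apply, Measure.restrict_apply_univ, smul_eq_mul]
  exact ENNReal.inv_mul_cancel hausdorffMeasure_slice_ne_zero_ne_top.1
    hausdorffMeasure_slice_ne_zero_ne_top.2

theorem map_ofFirstCol_uniformSlice : (uniformSlice n).map ofFirstCol = UM n := by
  have hd : 0 ≤ (n : ℝ) - 1 := sub_nonneg.2 (by exact_mod_cast NeZero.one_le)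
  have hemb := (isometry_ofFirstCol (n := n)).isClosedEmbedding.measurableEmbedding
  have hpre : ofFirstCol ⁻¹' MSet n = slice (Fin n) := by
    rw [← image_ofFirstCol_slice, hemb.injective.preimage_image]
  have hrange : MSet n ∩ Set.range ofFirstCol = MSet n := by
    rw [Set.inter_eq_left, ← image_ofFirstCol_slice]
    exact Set.image_subset_range _ _
  have hM : MeasurableSet (MSet n) := by
    rw [← image_ofFirstCol_slice]
    exact hemb.measurableSet_image.2 measurableSet_slice
  rw [uniformSlice, UM, Measure.map_smul, ← hpre, ← Measure.restrict_map hemb.measurable hM,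
    isometry_ofFirstCol.map_hausdorffMeasure (.inl hd), Measure.restrict_restrict hM, hrange, hpre,
    ← image_ofFirstCol_slice, isometry_ofFirstCol.hausdorffMeasure_image (.inl hd)]

theorem lintegral_resample {i j : Fin n} (hij : i ≠ j) {f : (Fin n → ℝ) → ENNReal}
    (hf : Measurable f) :
    ∫⁻ x, resample (i, j) f x ∂uniformSlice n = ∫⁻ x, f x ∂uniformSlice n := by
  have : IsFiniteMeasure ((μH[(n : ℝ) - 1]).restrict (slice (Fin n))) :=
    isFiniteMeasure_restrict.2 hausdorffMeasure_slice_ne_zero_ne_top.2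
  rw [uniformSlice, lintegral_smul_measure, lintegral_smul_measure, setLIntegral_resample _ hij hf]

end

theorem measurePreserving_two_sub :
    MeasurePreserving (fun x : Fin n → ℝ => 2 - x) (uniformSlice n) (uniformSlice n) := by
  set reflect := IsometryEquiv.subLeft (2 : Fin n → ℝ)
  have hpre : reflect ⁻¹' slice (Fin n) = slice (Fin n) := by
    ext x
    have hmem : ∀ i, 2 - x i ∈ Set.Icc (0 : ℝ) 2 ↔ x i ∈ Set.Icc (0 : ℝ) 2 := fun i => by
      constructor <;> rintro ⟨_, _⟩ <;> constructor <;> linarith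
    have hsum : ∑ i, (2 - x i) = n ↔ ∑ i, x i = n := by
      simp only [Finset.sum_sub_distrib, Finset.sum_const, Finset.card_univ, Fintype.card_fin,
        nsmul_eq_mul]
      constructor <;> intro h <;> linarith
    simpa [slice, reflect] using and_congr (forall_congr' hmem) hsum
  have h := (reflect.measurePreserving_hausdorffMeasure ((n : ℝ) - 1)).restrict_preimage
    (measurableSet_slice (ι := Fin n))
  rw [hpre] at h
  exact h.smul_measure _

end UniformMeasure

section WidthTail

variable {ι : Type*} [Fintype ι] [DecidableEq ι] {x : ι → ℝ} {i j : ι}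

theorem resample_indicator_lt_le (hx : x ∈ slice ι) (hij : i ≠ j) (η : ℝ) :
    resample (i, j) ({z | z i < η}.indicator fun z => ENNReal.ofReal (z j)) x ≤
      ENNReal.ofReal η := by
  set lo := loEnd (x i + x j)
  set hi := hiEnd (x i + x j)
  have hlo : 0 ≤ lo := le_max_left _ _
  have hw : 0 ≤ hi - lo := pairWidth_nonneg hx i j
  have hsum : lo + hi = x i + x j := loEnd_add_hiEnd _
  have hpoint : ∀ l ∈ Set.Icc (0 : ℝ) 1,
      ({z | z i < η}.indicator fun z => ENNReal.ofReal (z j)) (pairStep x ((i, j), l)) ≤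
        (Set.Icc 0 (η / hi)).indicator (fun _ => ENNReal.ofReal hi) l := by
    refine fun l hl => Set.indicator_apply_le' (fun hlow => ?_) fun _ => zero_le
    have hlt : lo + l * (hi - lo) < η := by simpa [pairStep, pairWidth] using hlow
    have hval : pairStep x ((i, j), l) j = hi - l * (hi - lo) := by
      rw [pairStep, setPair_right x hij, pairWidth]
      linarith
    have hle : hi - l * (hi - lo) ≤ hi := sub_le_self _ (mul_nonneg hl.1 hw)
    rcases (hlo.trans (sub_nonneg.1 hw)).eq_or_lt with h0 | hpos
    · rw [hval, ENNReal.ofReal_of_nonpos (hle.trans h0.ge)]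
      exact zero_le
    · have hmem : l ∈ Set.Icc 0 (η / hi) := ⟨hl.1, (le_div_iff₀ hpos).2 (by nlinarith [hl.2])⟩
      rw [hval, Set.indicator_of_mem hmem]
      exact ENNReal.ofReal_le_ofReal hle
  calc resample (i, j) ({z | z i < η}.indicator fun z => ENNReal.ofReal (z j)) x
      ≤ ∫⁻ l in Set.Icc 0 1, (Set.Icc 0 (η / hi)).indicator (fun _ => ENNReal.ofReal hi) l :=
        setLIntegral_mono' measurableSet_Icc hpoint
    _ ≤ ∫⁻ l, (Set.Icc 0 (η / hi)).indicator (fun _ => ENNReal.ofReal hi) l :=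
        setLIntegral_le_lintegral _ _
    _ = ENNReal.ofReal hi * ENNReal.ofReal (η / hi) := by
        rw [lintegral_indicator_const measurableSet_Icc, Real.volume_Icc, sub_zero]
    _ ≤ ENNReal.ofReal η := by
        rcases (hlo.trans (sub_nonneg.1 hw)).eq_or_lt with h0 | hpos
        · simp [← h0]
        · rw [← ENNReal.ofReal_mul hpos.le, mul_div_cancel₀ _ hpos.ne']

variable {n : ℕ}

theorem lintegral_indicator_lt_le (i k : Fin n) (η : ℝ) :
    ∫⁻ x, ({x | x i < η}.indicator fun x => ENNReal.ofReal (x k)) x ∂uniformSlice n ≤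
      ENNReal.ofReal η := by
  have : NeZero n := ⟨i.pos.ne'⟩
  have hmeas : Measurable ({x : Fin n → ℝ | x i < η}.indicator fun x => ENNReal.ofReal (x k)) :=
    (by fun_prop : Measurable fun x : Fin n → ℝ => ENNReal.ofReal (x k)).indicator
      (measurableSet_lt (by fun_prop) measurable_const)
  rcases eq_or_ne i k with rfl | hik
  · refine lintegral_le_const (ae_of_all _ fun x => ?_)
    exact Set.indicator_apply_le' (fun hx => ENNReal.ofReal_le_ofReal (le_of_lt hx))
      fun _ => zero_le
  · rw [← lintegral_resample hik hmeas]
    refine lintegral_le_const ?_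
    filter_upwards [ae_mem_slice n] with x hx using resample_indicator_lt_le hx hik η

theorem uniformSlice_coord_lt_le (i : Fin n) (η : ℝ) :
    uniformSlice n {x | x i < η} ≤ ENNReal.ofReal η := by
  set B : Set (Fin n → ℝ) := {x | x i < η}
  have hB : MeasurableSet B := measurableSet_lt (by fun_prop) measurable_const
  have hmeas : ∀ k, Measurable (B.indicator fun x => ENNReal.ofReal (x k)) := fun k =>
    (by fun_prop : Measurable fun x : Fin n → ℝ => ENNReal.ofReal (x k)).indicator hB
  have hsum : ∀ᵐ x ∂uniformSlice n,
      B.indicator (fun _ => (n : ENNReal)) x =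
        ∑ k, B.indicator (fun x => ENNReal.ofReal (x k)) x := by
    filter_upwards [ae_mem_slice n] with x hx
    by_cases hxB : x ∈ B
    · simp only [Set.indicator_of_mem hxB]
      rw [← ENNReal.ofReal_sum_of_nonneg fun k _ => (hx.1 k).1, hx.2]
      simp
    · simp only [Set.indicator_of_notMem hxB, Finset.sum_const_zero]
  have hle : n * uniformSlice n B ≤ n * ENNReal.ofReal η :=
    calc n * uniformSlice n B = ∫⁻ x, B.indicator (fun _ => (n : ENNReal)) x ∂uniformSlice n :=
          (lintegral_indicator_const hB _).symm
      _ = ∑ k, ∫⁻ x, B.indicator (fun x => ENNReal.ofReal (x k)) x ∂uniformSlice n := by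
          rw [lintegral_congr_ae hsum, lintegral_finsetSum _ fun k _ => hmeas k]
      _ ≤ ∑ _k : Fin n, ENNReal.ofReal η :=
          Finset.sum_le_sum fun k _ => lintegral_indicator_lt_le i k η
      _ = n * ENNReal.ofReal η := by simp
  exact (ENNReal.mul_le_mul_iff_right (Nat.cast_ne_zero.2 i.pos.ne') (by simp)).1 hle

theorem uniformSlice_pairWidth_lt_le (i j : Fin n) (η : ℝ) :
    uniformSlice n {x | pairWidth i j x < η} ≤ 2 * ENNReal.ofReal η := by
  have hreflect : uniformSlice n {x | 2 - x i < η} ≤ ENNReal.ofReal η :=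
    (measurePreserving_two_sub.measure_preimage
      (measurableSet_lt (by fun_prop) measurable_const).nullMeasurableSet).trans_le
      (uniformSlice_coord_lt_le i η)
  have hsub : ({x | pairWidth i j x < η} : Set (Fin n → ℝ)) ≤ᵐ[uniformSlice n]
      ({x | x i < η} ∪ {x | 2 - x i < η} : Set (Fin n → ℝ)) := by
    filter_upwards [ae_mem_slice n] with x hx (hw : pairWidth i j x < η)
    change x i < η ∨ 2 - x i < η
    obtain ⟨h₀, h₂⟩ := hx.1 j
    rw [pairWidth, loEnd, hiEnd] at hw
    rcases le_total (x i + x j) 2 with h | h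
    · rw [max_eq_left (by linarith), min_eq_right h] at hw
      exact .inl (by linarith)
    · rw [max_eq_right (by linarith), min_eq_left h] at hw
      exact .inr (by linarith)
  calc uniformSlice n {x | pairWidth i j x < η}
      ≤ uniformSlice n {x | x i < η} + uniformSlice n {x | 2 - x i < η} :=
        (measure_mono_ae hsub).trans (measure_union_le _ _)
    _ ≤ 2 * ENNReal.ofReal η := by
        rw [two_mul]
        exact add_le_add (uniformSlice_coord_lt_le i η) hreflect

end WidthTail

section MaximalCoupling

theorem lintegral_mul_add_le_of_le {α : Type*} [MeasurableSpace α] (μ : Measure α)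
    {p q g : α → ENNReal} (hqp : q ≤ p) (hg : ∀ a, g a ≤ 1) (hq : Measurable q)
    (hgm : Measurable g) :
    ∫⁻ a, p a * g a ∂μ + ∫⁻ a, q a ∂μ ≤ ∫⁻ a, q a * g a ∂μ + ∫⁻ a, p a ∂μ := by
  rw [← lintegral_add_right _ hq, ← lintegral_add_left (f := fun a => q a * g a) (hq.mul hgm)]
  refine lintegral_mono fun a => ?_
  obtain ⟨r, hr⟩ := exists_add_of_le (hqp a)
  calc p a * g a + q a = q a * g a + (q a + r * g a) := by rw [hr]; ring
    _ ≤ q a * g a + (q a + r * 1) := by gcongr; exact hg a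
    _ = q a * g a + p a := by rw [mul_one, hr]

theorem inv_mul_setLIntegral_Icc (g : ℝ → ENNReal) (a b : ℝ) {m : ℝ} (hm : 0 < m) :
    (ENNReal.ofReal m)⁻¹ * ∫⁻ u in Set.Icc a b, g u =
      ∫⁻ u, (Set.Icc a b).indicator (fun _ => (ENNReal.ofReal m)⁻¹) u * g u := by
  rw [← lintegral_const_mul' _ _ (by simpa using hm), ← lintegral_indicator measurableSet_Icc]
  refine lintegral_congr fun u => ?_
  by_cases hu : u ∈ Set.Icc a b <;> simp [hu]

theorem one_le_overlap_add {a b c d : ℝ} (hcd : c < d) :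
    1 ≤ (min b d - max a c) / max (b - a) (d - c) + (|a - c| + |b - d|) / (d - c) := by
  have hm : 0 < max (b - a) (d - c) := lt_max_of_lt_right (sub_pos.2 hcd)
  have hloss : max (b - a) (d - c) ≤ min b d - max a c + (|a - c| + |b - d|) := by
    rcases max_cases a c with ⟨hac, -⟩ | ⟨hac, -⟩ <;>
      rcases min_cases b d with ⟨hbd, -⟩ | ⟨hbd, -⟩ <;> rw [hac, hbd] <;>
      refine max_le ?_ ?_ <;>
      linarith [le_abs_self (a - c), neg_le_abs (a - c), le_abs_self (b - d), neg_le_abs (b - d)]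
  calc 1 ≤ (min b d - max a c + (|a - c| + |b - d|)) / max (b - a) (d - c) :=
        (one_le_div hm).2 hloss
    _ ≤ _ := by
        rw [add_div]
        gcongr
        exact le_max_right _ _

theorem average_Icc_le {a b c d : ℝ} (hab : a < b) (hcd : c < d) {g h : ℝ → ENNReal}
    (hg : ∀ u, g u ≤ 1) (hgm : Measurable g)
    (hgh : ∀ u ∈ Set.Icc a b ∩ Set.Icc c d, g u ≤ h u) :
    (ENNReal.ofReal (b - a))⁻¹ * ∫⁻ u in Set.Icc a b, g u ≤
      (ENNReal.ofReal (d - c))⁻¹ * (∫⁻ u in Set.Icc c d, h u) +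
        ENNReal.ofReal ((|a - c| + |b - d|) / (d - c)) := by
  set m := max (b - a) (d - c)
  have hm : 0 < m := lt_max_of_lt_left (sub_pos.2 hab)
  set p : ℝ → ENNReal := (Set.Icc a b).indicator fun _ => (ENNReal.ofReal (b - a))⁻¹
  -- the common part of the two uniform densities
  set q : ℝ → ENNReal :=
    (Set.Icc a b ∩ Set.Icc c d).indicator fun _ => (ENNReal.ofReal m)⁻¹
  have hqm : Measurable q := measurable_const.indicator (measurableSet_Icc.inter measurableSet_Icc)
  have hqp : q ≤ p := fun u => Set.indicator_apply_le' (fun hu => by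
    simp only [p, Set.indicator_of_mem hu.1]
    gcongr
    exact le_max_left _ _) fun _ => zero_le
  have hqh : ∀ u, q u * g u ≤
      (Set.Icc c d).indicator (fun _ => (ENNReal.ofReal (d - c))⁻¹) u * h u := fun u => by
    by_cases hu : u ∈ Set.Icc a b ∩ Set.Icc c d
    · simp only [q, Set.indicator_of_mem hu, Set.indicator_of_mem hu.2]
      gcongr
      · exact le_max_right _ _
      · exact hgh u hu
    · simp only [q, Set.indicator_of_notMem hu, zero_mul, zero_le]
  have hp1 : ∫⁻ u, p u = 1 := by
    rw [lintegral_indicator_const measurableSet_Icc, Real.volume_Icc]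
    exact ENNReal.inv_mul_cancel (by simpa using hab) ENNReal.ofReal_ne_top
  have hq_eq : ∫⁻ u, q u = ENNReal.ofReal ((min b d - max a c) / m) := by
    rw [lintegral_indicator_const (measurableSet_Icc.inter measurableSet_Icc), Set.Icc_inter_Icc,
      Real.volume_Icc, ENNReal.ofReal_div_of_pos hm, div_eq_mul_inv, mul_comm]
  have hq1 : 1 ≤ ENNReal.ofReal ((|a - c| + |b - d|) / (d - c)) + ∫⁻ u, q u := by
    rw [hq_eq, add_comm, ← ENNReal.ofReal_one]
    exact (ENNReal.ofReal_le_ofReal (one_le_overlap_add hcd)).trans ENNReal.ofReal_add_le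
  have hq_top : ∫⁻ u, q u ≠ ⊤ := hq_eq ▸ ENNReal.ofReal_ne_top
  rw [inv_mul_setLIntegral_Icc g a b (sub_pos.2 hab),
    inv_mul_setLIntegral_Icc h c d (sub_pos.2 hcd)]
  refine ENNReal.le_of_add_le_add_right hq_top ?_
  refine (lintegral_mul_add_le_of_le volume hqp hg hqm hgm).trans ?_
  rw [hp1, add_assoc]
  exact add_le_add (lintegral_mono hqh) hq1

end MaximalCoupling

section Discrepancy

variable {ι : Type*} [Fintype ι]

/-- The `ℓ¹` distance of two vectors. -/
def l1Dist (x y : ι → ℝ) : ℝ := ∑ k, |x k - y k|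

variable {x y : ι → ℝ} {i j : ι}

theorem abs_pair_sub_le_l1Dist (x y : ι → ℝ) (hij : i ≠ j) :
    |x i + x j - (y i + y j)| ≤ l1Dist x y := by
  classical
  calc |x i + x j - (y i + y j)| ≤ |x i - y i| + |x j - y j| := by
        rw [add_sub_add_comm]
        exact abs_add_le _ _
    _ = ∑ k ∈ {i, j}, |x k - y k| := by rw [Finset.sum_pair hij]
    _ ≤ l1Dist x y := Finset.sum_le_univ_sum_of_nonneg fun _ => abs_nonneg _

theorem abs_pairWidth_sub_le (x y : ι → ℝ) (hij : i ≠ j) :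
    |pairWidth i j x - pairWidth i j y| ≤ l1Dist x y := by
  refine le_trans ?_ (abs_pair_sub_le_l1Dist x y hij)
  rw [← abs_loEnd_sub_add_abs_hiEnd_sub (x i + x j), add_comm, pairWidth, pairWidth,
    sub_sub_sub_comm]
  exact abs_sub _ _

variable [DecidableEq ι]

theorem l1Dist_setPair_le (x y : ι → ℝ) (hij : i ≠ j) {u v : ℝ}
    (h : |u - v| + |x i + x j - u - (y i + y j - v)| ≤ |x i + x j - (y i + y j)|) :
    l1Dist (setPair x i j u) (setPair y i j v) ≤ l1Dist x y := by
  have hsplit := sum_add_pair (f := fun k => |setPair x i j u k - setPair y i j v k|)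
    (g := fun k => |x k - y k|) hij fun k hi hj => by
      simp only [setPair_of_ne _ hi hj]
  simp only [setPair_left, setPair_right _ hij] at hsplit
  have htri : |x i + x j - (y i + y j)| ≤ |x i - y i| + |x j - y j| := by
    rw [add_sub_add_comm]
    exact abs_add_le _ _
  unfold l1Dist
  linarith

theorem l1Dist_pairStep_le (x y : ι → ℝ) (hij : i ≠ j) {l : ℝ} (hl : l ∈ Set.Icc (0 : ℝ) 1) :
    l1Dist (pairStep x ((i, j), l)) (pairStep y ((i, j), l)) ≤ l1Dist x y := by
  refine l1Dist_setPair_le x y hij ?_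
  simp only [pairWidth]
  set s := x i + x j
  set t := y i + y j
  set δ := loEnd s - loEnd t
  set ε := hiEnd s - hiEnd t
  have hs := loEnd_add_hiEnd s
  have ht := loEnd_add_hiEnd t
  calc _ = |(1 - l) * δ + l * ε| + |(1 - l) * ε + l * δ| := by
        congr 2 <;> simp only [δ, ε] <;> linarith
    _ ≤ ((1 - l) * |δ| + l * |ε|) + ((1 - l) * |ε| + l * |δ|) := by
        have hl' : 0 ≤ 1 - l := sub_nonneg.2 hl.2
        gcongr <;> refine (abs_add_le _ _).trans_eq ?_ <;>
          rw [abs_mul, abs_mul, abs_of_nonneg hl', abs_of_nonneg hl.1]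
    _ = |δ| + |ε| := by ring
    _ = |s - t| := abs_loEnd_sub_add_abs_hiEnd_sub s t

end Discrepancy

section DominatedOff

variable {ι : Type*} [Fintype ι]

/-- The comparison of test functions that a coupling would give: `g x` exceeds `h y` by at most `c`
times the `ℓ¹` distance, for all `x, y` in the slice that agree off `A`. -/
def DominatedOff (A : Finset ι) (c : ENNReal) (g h : (ι → ℝ) → ENNReal) : Prop :=
  ∀ ⦃x⦄, x ∈ slice ι → ∀ ⦃y⦄, y ∈ slice ι → (∀ k ∉ A, x k = y k) →
    g x ≤ h y + c * ENNReal.ofReal (l1Dist x y)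

variable {A : Finset ι} {c : ENNReal} {g h : (ι → ℝ) → ENNReal} {i j : ι}

theorem dominatedOff_singleton (r : ι) (c : ENNReal) (g : (ι → ℝ) → ENNReal) :
    DominatedOff {r} c g g := by
  classical
  intro x hx y hy hxy
  have hoff : ∀ k ≠ r, x k = y k := fun k hk => hxy k (by simpa using hk)
  have hr : x r = y r := by
    have hsum := hx.2.trans hy.2.symm
    rwa [← Finset.add_sum_erase _ _ (Finset.mem_univ r), ← Finset.add_sum_erase _ y
      (Finset.mem_univ r), Finset.sum_congr rfl fun k hk => hoff k (Finset.ne_of_mem_erase hk),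
      add_left_inj] at hsum
  have heq : x = y := funext fun k => by
    by_cases hk : k = r
    · rw [hk, hr]
    · exact hoff k hk
  exact heq ▸ le_self_add

variable [DecidableEq ι]

theorem DominatedOff.resample_of_iff (hgh : DominatedOff A c g h) (hij : i ≠ j)
    (hA : i ∈ A ↔ j ∈ A) (hh : Measurable h) :
    DominatedOff A c (resample (i, j) g) (resample (i, j) h) := by
  intro x hx y hy hxy
  rw [← resample_add_const _ hh]
  refine setLIntegral_mono' measurableSet_Icc fun l hl => ?_
  refine (hgh (pairStep_mem_slice hx hij hl) (pairStep_mem_slice hy hij hl) fun k hk => ?_).trans ?_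
  · by_cases hk' : k = i ∨ k = j
    · have hi : i ∉ A := by rcases hk' with rfl | rfl <;> simpa [hA] using hk
      have hj : j ∉ A := mt hA.2 hi
      rcases hk' with rfl | rfl <;>
        simp only [pairStep, pairWidth, setPair_left, setPair_right _ hij, hxy _ hi, hxy _ hj]
    · rw [not_or] at hk'
      simp only [pairStep, setPair_of_ne _ hk'.1 hk'.2, hxy k hk]
  · exact add_le_add_right (mul_le_mul_right (ENNReal.ofReal_le_ofReal
      (l1Dist_pairStep_le x y hij hl)) c) _

theorem resample_le_resample_add {x y : ι → ℝ} (hx : x ∈ slice ι) (hy : y ∈ slice ι) (hij : i ≠ j)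
    (hg : ∀ z, g z ≤ 1) (hgm : Measurable g) {η : ℝ} (hη : 0 < η) (hw : η ≤ pairWidth i j y)
    (hgh : ∀ u, setPair x i j u ∈ slice ι → setPair y i j u ∈ slice ι →
      g (setPair x i j u) ≤ h (setPair y i j u)) :
    resample (i, j) g x ≤
      resample (i, j) h y + (ENNReal.ofReal η)⁻¹ * ENNReal.ofReal (l1Dist x y) := by
  rw [← ENNReal.ofReal_inv_of_pos hη, ← ENNReal.ofReal_mul (by positivity), inv_mul_eq_div]
  rcases le_or_gt η (l1Dist x y) with hfar | hclose
  · refine (resample_le_one hg _ _).trans (le_add_left ?_)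
    rw [← ENNReal.ofReal_one]
    exact ENNReal.ofReal_le_ofReal ((one_le_div hη).2 hfar)
  have hwy : 0 < pairWidth i j y := hη.trans_le hw
  have hwx : 0 < pairWidth i j x := by
    linarith [neg_le_of_abs_le (abs_pairWidth_sub_le x y hij)]
  have hgu : Measurable fun u => g (setPair x i j u) := by
    simp only [setPair_eq_add_smul x hij]
    fun_prop
  rw [resample_eq_average g hwx, resample_eq_average h hwy]
  refine (average_Icc_le (sub_pos.1 hwx) (sub_pos.1 hwy) (fun u => hg _) hgu fun u hu =>
    hgh u ((setPair_mem_slice_iff hx hij).2 hu.1) ((setPair_mem_slice_iff hy hij).2 hu.2)).trans ?_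
  rw [abs_loEnd_sub_add_abs_hiEnd_sub]
  gcongr ?_ + ENNReal.ofReal ?_
  · rfl
  · exact div_le_div₀ (Finset.sum_nonneg fun _ _ => abs_nonneg _) (abs_pair_sub_le_l1Dist x y hij)
      hη hw

theorem DominatedOff.resample_insert (hgh : DominatedOff A c g h) (hi : i ∉ A) (hj : j ∈ A)
    (hg : ∀ z, g z ≤ 1) (hgm : Measurable g) (hh : Measurable h) {η : ℝ} (hη : 0 < η) :
    DominatedOff (insert i A) (c + (ENNReal.ofReal η)⁻¹) (resample (i, j) g)
      ({y | pairWidth i j y < η}.indicator 1 + resample (i, j) h) := by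
  intro x hx y hy hxy
  have hij : i ≠ j := fun h => hi (h ▸ hj)
  by_cases hw : pairWidth i j y < η
  · have hmem : y ∈ {y | pairWidth i j y < η} := hw
    rw [Pi.add_apply, Set.indicator_of_mem hmem, add_assoc]
    exact (resample_le_one hg _ _).trans le_self_add
  have hbound := resample_le_resample_add (h := fun z => h z + c * ENNReal.ofReal (l1Dist x y))
    hx hy hij hg hgm hη (not_lt.1 hw) fun u hxu hyu => ?_
  · rw [resample_add_const _ hh, add_assoc, ← add_mul] at hbound
    simpa [hw] using hbound
  refine (hgh hxu hyu fun k hk => ?_).trans ?_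
  · by_cases hki : k = i
    · simp [hki]
    have hkj : k ≠ j := fun h => hk (h ▸ hj)
    rw [setPair_of_ne x hki hkj, setPair_of_ne y hki hkj]
    exact hxy k (by simp [hki, hk])
  · gcongr
    refine l1Dist_setPair_le x y hij ?_
    rw [sub_self, abs_zero, zero_add, sub_sub_sub_cancel_right]

end DominatedOff

section Infection

variable {ι : Type*} [DecidableEq ι]

/-- The rows that may differ before a redistribution of `e` if afterwards two coupled states are to
differ only in the rows of `A`. -/
def spread (e : ι × ι) (A : Finset ι) : Finset ι :=
  if e.1 ∈ A ∨ e.2 ∈ A then insert e.1 (insert e.2 A) else A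

variable {A : Finset ι} {e : ι × ι} {i j r : ι}

theorem spread_swap (i j : ι) (A : Finset ι) : spread (j, i) A = spread (i, j) A := by
  simp only [spread, or_comm, Finset.insert_comm]

theorem spread_of_iff (h : e.1 ∈ A ↔ e.2 ∈ A) : spread e A = A := by
  by_cases h₂ : e.2 ∈ A <;> simp [spread, h, h₂]

theorem spread_eq_insert (hi : i ∉ A) (hj : j ∈ A) : spread (i, j) A = insert i A := by
  simp [spread, hi, hj]

theorem card_spread (h : ¬(e.1 ∈ A ↔ e.2 ∈ A)) : (spread e A).card = A.card + 1 := by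
  obtain ⟨i, j⟩ := e
  rcases (xor_iff_not_iff _ _).2 h with ⟨hi, hj⟩ | ⟨hj, hi⟩
  · rw [← spread_swap, spread_eq_insert hj hi, Finset.card_insert_of_notMem hj]
  · rw [spread_eq_insert hi hj, Finset.card_insert_of_notMem hi]

/-- The rows infected from `r` by the pairs of `w`, read from the last to the first. -/
def infected (r : ι) (w : List (ι × ι)) : Finset ι := w.foldr spread {r}

theorem infected_cons (r : ι) (e : ι × ι) (w : List (ι × ι)) :
    infected r (e :: w) = spread e (infected r w) := rfl

theorem infected_nonempty (r : ι) (w : List (ι × ι)) : (infected r w).Nonempty := by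
  induction w with
  | nil => exact Finset.singleton_nonempty r
  | cons e w ih =>
    rw [infected_cons, spread]
    split_ifs
    exacts [Finset.insert_nonempty _ _, ih]

/-- Expected number of infections, along the chain that redistributes the pairs of `w`, which pass
through a pair of rows with less than `η` of freedom. -/
def defect (r : ι) (η : ℝ) : List (ι × ι) → (ι → ℝ) → ENNReal
  | [] => 0
  | e :: w => (if e.1 ∈ infected r w ↔ e.2 ∈ infected r w then 0 else
      {y | pairWidth e.1 e.2 y < η}.indicator 1) + resample e (defect r η w)

theorem measurable_defect (r : ι) (η : ℝ) (w : List (ι × ι)) : Measurable (defect r η w) := by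
  induction w with
  | nil => exact measurable_zero
  | cons e w ih =>
    refine Measurable.add ?_ (measurable_resample e ih)
    split_ifs
    exacts [measurable_zero, measurable_one.indicator
      (measurableSet_lt (measurable_pairWidth e.1 e.2) measurable_const)]

theorem dominatedOff_resampleList [Fintype ι] (r : ι) {η : ℝ} (hη : 0 < η)
    {f : (ι → ℝ) → ENNReal} (hf : Measurable f) (hf₁ : ∀ z, f z ≤ 1) {w : List (ι × ι)}
    (hw : ∀ e ∈ w, e.1 ≠ e.2) :
    DominatedOff (infected r w) ((infected r w).card * (ENNReal.ofReal η)⁻¹) (resampleList w f)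
      (resampleList w f + defect r η w) := by
  induction w with
  | nil => simpa [defect, infected, resampleList] using dominatedOff_singleton r _ f
  | cons e w ih =>
    obtain ⟨i, j⟩ := e
    have hij : i ≠ j := hw _ List.mem_cons_self
    replace ih := ih fun e he => hw e (List.mem_cons_of_mem _ he)
    have hfw := measurable_resampleList hf w
    have hm := hfw.add (measurable_defect r η w)
    have hf₁w := resampleList_le_one hf₁ w
    change DominatedOff _ _ (resample (i, j) (resampleList w f))
      (resample (i, j) (resampleList w f) + (_ + resample (i, j) (defect r η w)))
    rw [add_left_comm, ← resample_add _ hfw, infected_cons]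
    by_cases hcut : i ∈ infected r w ↔ j ∈ infected r w
    · rw [if_pos hcut, zero_add, spread_of_iff hcut]
      exact ih.resample_of_iff hij hcut hm
    rw [if_neg hcut, card_spread hcut, Nat.cast_add_one, add_mul, one_mul]
    rcases (xor_iff_not_iff _ _).2 hcut with ⟨hi, hj⟩ | ⟨hj, hi⟩
    · simp only [← spread_swap i j, ← resample_swap _ hij, ← pairWidth_comm i j,
        spread_eq_insert hj hi]
      exact ih.resample_insert hj hi hf₁w hfw hm hη
    · rw [spread_eq_insert hi hj]
      exact ih.resample_insert hi hj hf₁w hfw hm hη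

theorem lintegral_defect_le {n : ℕ} [NeZero n] (r : Fin n) (η : ℝ) {w : List (Fin n × Fin n)}
    (hw : ∀ e ∈ w, e.1 ≠ e.2) :
    ∫⁻ y, defect r η w y ∂uniformSlice n ≤ (infected r w).card * (2 * ENNReal.ofReal η) := by
  induction w with
  | nil => simp [defect]
  | cons e w ih =>
    replace ih := ih fun e he => hw e (List.mem_cons_of_mem _ he)
    have hinv := lintegral_resample (hw e List.mem_cons_self) (measurable_defect r η w)
    simp only [defect, Pi.add_apply]
    rw [lintegral_add_right _ (measurable_resample e (measurable_defect r η w)), hinv,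
      infected_cons]
    by_cases hcut : e.1 ∈ infected r w ↔ e.2 ∈ infected r w
    · simpa [hcut, spread_of_iff hcut] using ih
    rw [if_neg hcut, card_spread hcut, Nat.cast_add_one, add_one_mul, add_comm,
      lintegral_indicator_one (measurableSet_lt (measurable_pairWidth e.1 e.2) measurable_const)]
    exact add_le_add ih (uniformSlice_pairWidth_lt_le e.1 e.2 η)

end Infection

section InfectionTime

variable {n : ℕ}

/-- Ratio of uninfected to infected rows, the potential of the infection `A`. -/
def uninfectedRatio (A : Finset (Fin n)) : ℝ := Aᶜ.card / A.card

theorem uninfectedRatio_nonneg (A : Finset (Fin n)) : 0 ≤ uninfectedRatio A := by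
  unfold uninfectedRatio
  positivity

theorem cast_card_compl (A : Finset (Fin n)) : (Aᶜ.card : ℝ) = n - A.card := by
  rw [Finset.card_compl, Nat.cast_sub (Finset.card_le_univ _), Fintype.card_fin]

theorem uninfectedRatio_spread {A : Finset (Fin n)} (hA : A.Nonempty) (e : Fin n × Fin n) :
    uninfectedRatio (spread e A) = uninfectedRatio A -
      if e.1 ∈ A ↔ e.2 ∈ A then 0 else (n : ℝ) / (A.card * (A.card + 1)) := by
  have : (0 : ℝ) < A.card := by exact_mod_cast hA.card_pos
  split_ifs with hcut
  · rw [spread_of_iff hcut, sub_zero]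
  · rw [uninfectedRatio, uninfectedRatio, cast_card_compl, cast_card_compl, card_spread hcut]
    push_cast
    field_simp
    ring

theorem sum_pairsF_ite_iff (A : Finset (Fin n)) (c : ℝ) :
    ∑ e ∈ pairsF n, (if e.1 ∈ A ↔ e.2 ∈ A then 0 else c) = A.card * Aᶜ.card * c := by
  have hsum := two_mul_sum_pairsF (fun i j => if i ∈ A ↔ j ∈ A then 0 else c)
    fun i j => by simp only [Iff.comm]
  have hsplit : ∀ i j : Fin n, (if i ∈ A ↔ j ∈ A then 0 else c) =
      (if i ∈ A then 1 else 0) * (if j ∈ Aᶜ then 1 else 0) * c +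
        (if i ∈ Aᶜ then 1 else 0) * (if j ∈ A then 1 else 0) * c := by
    intro i j
    by_cases hi : i ∈ A <;> by_cases hj : j ∈ A <;> simp [hi, hj]
  have hcard : ∀ B : Finset (Fin n), ∑ i, (if i ∈ B then (1 : ℝ) else 0) = B.card := by simp
  simp only [iff_self, if_true, Finset.sum_const_zero, sub_zero] at hsum
  simp only [hsplit, Finset.sum_add_distrib, ← Finset.sum_mul, ← Finset.mul_sum, hcard] at hsum ⊢
  linarith

theorem lintegral_uninfectedRatio_spread_le [n.AtLeastTwo] {A : Finset (Fin n)}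
    (hA : A.Nonempty) :
    ∫⁻ e, ENNReal.ofReal (uninfectedRatio (spread e A)) ∂unifOn (pairsF n) ≤
      ENNReal.ofReal (1 - 1 / n) * ENNReal.ofReal (uninfectedRatio A) := by
  have hn : (2 : ℝ) ≤ n := by exact_mod_cast Nat.AtLeastTwo.prop
  have hk : (1 : ℝ) ≤ A.card := by exact_mod_cast hA.card_pos
  have hkn : (A.card : ℝ) ≤ n := by exact_mod_cast (card_finset_fin_le A)
  rw [lintegral_unifOn_ofReal (pairsF_nonempty n) fun e _ => uninfectedRatio_nonneg _,
    ← ENNReal.ofReal_mul (by rw [sub_nonneg, div_le_one] <;> linarith)]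
  refine ENNReal.ofReal_le_ofReal ?_
  simp only [uninfectedRatio_spread hA, Finset.sum_sub_distrib, sum_pairsF_ite_iff,
    Finset.sum_const, nsmul_eq_mul, card_pairsF]
  rw [uninfectedRatio, cast_card_compl]
  set k : ℝ := (A.card : ℝ)
  have hloss : (n - k) / k / n ≤ 2 * (n - k) / ((n - 1) * (k + 1)) := by
    rw [div_div, div_le_div_iff₀ (by positivity) (mul_pos (by linarith) (by linarith))]
    have : (n - 1) * (k + 1) ≤ 2 * (k * n) := by nlinarith
    nlinarith [mul_le_mul_of_nonneg_left this (sub_nonneg.2 hkn)]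
  have hn1 : (n : ℝ) - 1 ≠ 0 := by linarith
  calc _ = (n - k) / k - 2 * (n - k) / ((n - 1) * (k + 1)) := by field_simp
    _ ≤ (n - k) / k - (n - k) / k / n := sub_le_sub_left hloss _
    _ = _ := by ring

theorem lintegral_uninfectedRatio_infected_le [n.AtLeastTwo] (r : Fin n) (T : ℕ) :
    ∫⁻ ω : Fin T → Fin n × Fin n, ENNReal.ofReal (uninfectedRatio (infected r (List.ofFn ω)))
        ∂Measure.pi (fun _ => unifOn (pairsF n)) ≤
      ENNReal.ofReal (1 - 1 / n) ^ T * n := by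
  induction T with
  | zero =>
    simp [infected, uninfectedRatio, Finset.card_compl]
  | succ T ih =>
    rw [lintegral_pi_succ _ T (measurable_of_finite _),
      lintegral_lintegral_swap (measurable_of_finite _).aemeasurable, pow_succ', mul_assoc]
    simp only [List.ofFn_succ, Fin.cons_zero, Fin.cons_succ, infected_cons]
    refine (lintegral_mono fun ω =>
      lintegral_uninfectedRatio_spread_le (infected_nonempty r (List.ofFn ω))).trans ?_
    rw [lintegral_const_mul _ (measurable_of_finite _)]
    gcongr

theorem one_sub_pow_le_exp_neg_mul {p : ℝ} (hp : p ≤ 1) (T : ℕ) :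
    (1 - p) ^ T ≤ Real.exp (-(T * p)) :=
  calc (1 - p) ^ T ≤ Real.exp (-p) ^ T :=
        pow_le_pow_left₀ (sub_nonneg.2 hp) (Real.one_sub_le_exp_neg p) T
    _ = Real.exp (-(T * p)) := by rw [← Real.exp_nat_mul, mul_neg]

theorem measure_infected_ne_univ_le [n.AtLeastTwo] (r : Fin n) (T : ℕ) :
    Measure.pi (fun _ : Fin T => unifOn (pairsF n)) {ω | infected r (List.ofFn ω) ≠ Finset.univ} ≤
      ENNReal.ofReal (n ^ 2 * Real.exp (-(T / n))) := by
  have hn : (1 : ℝ) ≤ n := by exact_mod_cast NeZero.one_le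
  have hp : 0 ≤ 1 - 1 / (n : ℝ) := sub_nonneg.2 ((div_le_one (by linarith)).2 hn)
  have hratio : ∀ A : Finset (Fin n), A.Nonempty → A ≠ Finset.univ →
      1 ≤ (n : ENNReal) * ENNReal.ofReal (uninfectedRatio A) := by
    intro A hA hne
    have hcompl : Aᶜ.Nonempty :=
      Finset.nonempty_iff_ne_empty.2 (mt (Finset.compl_eq_empty_iff A).1 hne)
    have hc : (1 : ℝ) ≤ Aᶜ.card := by exact_mod_cast hcompl.card_pos
    have hk : (A.card : ℝ) ≤ n := by exact_mod_cast (card_finset_fin_le A)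
    have hpos : (0 : ℝ) < A.card := by exact_mod_cast hA.card_pos
    rw [← ENNReal.ofReal_natCast, ← ENNReal.ofReal_mul (by positivity), ENNReal.one_le_ofReal,
      uninfectedRatio, mul_div_assoc', one_le_div hpos]
    nlinarith
  rw [← lintegral_indicator_one (Set.toFinite _).measurableSet]
  calc _ ≤ ∫⁻ ω, (n : ENNReal) * ENNReal.ofReal (uninfectedRatio (infected r (List.ofFn ω)))
        ∂Measure.pi (fun _ => unifOn (pairsF n)) := by
        refine lintegral_mono fun ω => Set.indicator_apply_le' (fun h => ?_) fun _ => zero_le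
        exact hratio _ (infected_nonempty r _) h
    _ ≤ n * (ENNReal.ofReal (1 - 1 / n) ^ T * n) := by
        rw [lintegral_const_mul _ (measurable_of_finite _)]
        gcongr
        exact lintegral_uninfectedRatio_infected_le r T
    _ = ENNReal.ofReal (n ^ 2 * (1 - 1 / n) ^ T) := by
        rw [← ENNReal.ofReal_pow hp, ← ENNReal.ofReal_natCast, ← ENNReal.ofReal_mul (by positivity),
          ← ENNReal.ofReal_mul (by positivity)]
        ring_nf
    _ ≤ ENNReal.ofReal (n ^ 2 * Real.exp (-(T / n))) := by
        rw [← mul_one_div (T : ℝ)]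
        gcongr
        exact one_sub_pow_le_exp_neg_mul (sub_nonneg.1 hp) T

end InfectionTime

section SecondStage

variable {n : ℕ} [n.AtLeastTwo]

theorem ae_forall_mem_ofFn_ne (n T : ℕ) [n.AtLeastTwo] :
    ∀ᵐ ω ∂Measure.pi (fun _ : Fin T => unifOn (pairsF n)), ∀ e ∈ List.ofFn ω, e.1 ≠ e.2 := by
  have hpair : ∀ᵐ e ∂unifOn (pairsF n), e.1 ≠ e.2 :=
    (ae_unifOn_mem _).mono fun e => ne_of_mem_pairsF
  simp only [List.forall_mem_ofFn_iff]
  exact ae_all_iff.2 fun t =>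
    (Measure.quasiMeasurePreserving_eval (fun _ : Fin T => unifOn (pairsF n)) t).ae hpair

theorem exists_dominatedOff_univ_gibbsOp_iterate {η : ℝ} (hη : 0 < η)
    {f : (Fin n → ℝ) → ENNReal} (hf : Measurable f) (hf₁ : ∀ z, f z ≤ 1) (T : ℕ) :
    ∃ D : (Fin n → ℝ) → ENNReal, Measurable D ∧
      ∫⁻ y, D y ∂uniformSlice n ≤
        n * (2 * ENNReal.ofReal η) + ENNReal.ofReal (n ^ 2 * Real.exp (-(T / n))) ∧
      DominatedOff Finset.univ (n * (ENNReal.ofReal η)⁻¹) ((gibbsOp n)^[T] f)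
        ((gibbsOp n)^[T] f + D) := by
  set ν : Measure (Fin T → Fin n × Fin n) := Measure.pi fun _ => unifOn (pairsF n)
  set bad : Set (Fin T → Fin n × Fin n) := {ω | infected 0 (List.ofFn ω) ≠ Finset.univ}
  have hdefect : Measurable fun p : (Fin n → ℝ) × (Fin T → Fin n × Fin n) =>
      defect 0 η (List.ofFn p.2) p.1 :=
    measurable_from_prod_countable_left fun ω => measurable_defect 0 η (List.ofFn ω)
  refine ⟨fun y => ∫⁻ ω, defect 0 η (List.ofFn ω) y ∂ν + ν bad,
    hdefect.lintegral_prod_right'.add_const _, ?_, fun x hx y hy _ => ?_⟩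
  · rw [lintegral_add_right _ measurable_const, lintegral_const, measure_univ, mul_one,
      lintegral_lintegral_swap hdefect.aemeasurable]
    refine add_le_add ?_ (measure_infected_ne_univ_le 0 T)
    refine (lintegral_mono_ae ((ae_forall_mem_ofFn_ne n T).mono fun ω hω =>
      (lintegral_defect_le 0 η hω).trans (mul_le_mul_left (Nat.cast_le.2
        (card_finset_fin_le _)) _))).trans_eq ?_
    simp
  · have hdom : ∀ᵐ ω ∂ν, resampleList (List.ofFn ω) f x ≤
        resampleList (List.ofFn ω) f y + (defect 0 η (List.ofFn ω) y + bad.indicator 1 ω) +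
          n * (ENNReal.ofReal η)⁻¹ * ENNReal.ofReal (l1Dist x y) := by
      filter_upwards [ae_forall_mem_ofFn_ne n T] with ω hω
      by_cases hbad : ω ∈ bad
      · rw [Set.indicator_of_mem hbad]
        exact (resampleList_le_one hf₁ _ x).trans (le_add_right (le_add_left le_add_self))
      · have huniv : infected 0 (List.ofFn ω) = Finset.univ := not_not.1 hbad
        have h := dominatedOff_resampleList 0 hη hf hf₁ hω hx hy fun k hk => by simp [huniv] at hk
        simpa [hbad, huniv] using h
    rw [Pi.add_apply, gibbsOp_iterate_apply hf, gibbsOp_iterate_apply hf]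
    refine (lintegral_mono_ae hdom).trans_eq ?_
    simp only [lintegral_add_left (measurable_of_finite _), lintegral_const, measure_univ, mul_one,
      lintegral_indicator_one (Set.toFinite bad).measurableSet]
    rfl

end SecondStage

section FirstStage

variable {ι : Type*} [Fintype ι]

/-- Squared `ℓ²` distance. -/
def sqDist (x y : ι → ℝ) : ℝ := ∑ k, (x k - y k) ^ 2

theorem sqDist_nonneg (x y : ι → ℝ) : 0 ≤ sqDist x y := Finset.sum_nonneg fun _ _ => sq_nonneg _

theorem sqDist_le {x y : ι → ℝ} (hx : x ∈ slice ι) (hy : y ∈ slice ι) :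
    sqDist x y ≤ 4 * Fintype.card ι := by
  have h : ∀ k ∈ Finset.univ, (x k - y k) ^ 2 ≤ 4 := fun k _ => by
    have := hx.1 k
    have := hy.1 k
    simp only [Set.mem_Icc] at *
    nlinarith
  simpa [sqDist, mul_comm] using Finset.sum_le_card_nsmul _ _ _ h

theorem l1Dist_le (x y : ι → ℝ) {ρ : ℝ} (hρ : 0 < ρ) :
    l1Dist x y ≤ (4 * ρ)⁻¹ * sqDist x y + Fintype.card ι * ρ := by
  have h : ∀ k, |x k - y k| ≤ (4 * ρ)⁻¹ * (x k - y k) ^ 2 + ρ := fun k => by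
    rw [← sq_abs, inv_mul_eq_div, div_add' _ _ _ (by positivity), le_div_iff₀ (by positivity)]
    nlinarith [sq_nonneg (|x k - y k| - 2 * ρ)]
  refine (Finset.sum_le_sum fun k _ => h k).trans_eq ?_
  rw [Finset.sum_add_distrib, ← Finset.mul_sum, Finset.sum_const, nsmul_eq_mul, sqDist,
    Finset.card_univ]

variable [DecidableEq ι]

theorem sqDist_setPair (x y : ι → ℝ) {i j : ι} (hij : i ≠ j) (u v : ℝ) :
    sqDist (setPair x i j u) (setPair y i j v) = sqDist x y - (x i - y i) ^ 2 - (x j - y j) ^ 2 +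
      ((u - v) ^ 2 + (x i + x j - u - (y i + y j - v)) ^ 2) := by
  have h := sum_add_pair (f := fun k => (setPair x i j u k - setPair y i j v k) ^ 2)
    (g := fun k => (x k - y k) ^ 2) hij fun k hi hj => by simp only [setPair_of_ne _ hi hj]
  simp only [setPair_left, setPair_right _ hij] at h
  simp only [sqDist]
  linarith

theorem integral_sub_mul_sub_sq (p q : ℝ) :
    ∫ l in (0 : ℝ)..1, (p - q * (l - l ^ 2)) = p - q / 6 := by
  have hi : ∀ f : ℝ → ℝ, Continuous f → IntervalIntegrable f volume 0 1 :=
    fun f hf => hf.intervalIntegrable 0 1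
  rw [intervalIntegral.integral_sub (hi _ (by fun_prop)) (hi _ (by fun_prop)),
    intervalIntegral.integral_const_mul,
    intervalIntegral.integral_sub (hi _ (by fun_prop)) (hi _ (by fun_prop)),
    intervalIntegral.integral_const, integral_id, integral_pow]
  norm_num
  ring

theorem lintegral_sqDist_pairStep_le (x y : ι → ℝ) {i j : ι} (hij : i ≠ j) :
    ∫⁻ l in Set.Icc (0 : ℝ) 1,
        ENNReal.ofReal (sqDist (pairStep x ((i, j), l)) (pairStep y ((i, j), l))) ≤
      ENNReal.ofReal (sqDist x y - (x i - y i) ^ 2 - (x j - y j) ^ 2 +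
        2 / 3 * (x i - y i + (x j - y j)) ^ 2) := by
  have hx := loEnd_add_hiEnd (x i + x j)
  have hy := loEnd_add_hiEnd (y i + y j)
  set a := loEnd (x i + x j) - loEnd (y i + y j) with ha
  set b := hiEnd (x i + x j) - hiEnd (y i + y j) with hb
  set K := sqDist x y - (x i - y i) ^ 2 - (x j - y j) ^ 2 with hK
  have hab : 0 ≤ a * b := loEnd_sub_mul_hiEnd_sub_nonneg _ _
  have hsum : x i - y i + (x j - y j) = a + b := by linarith
  have hstep : ∀ l, sqDist (pairStep x ((i, j), l)) (pairStep y ((i, j), l)) =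
      K + a ^ 2 + b ^ 2 - 2 * (a - b) ^ 2 * (l - l ^ 2) := fun l => by
    have hright : ∀ u v, x i + x j - u - (y i + y j - v) = a + b - (u - v) := fun u v => by
      rw [← hsum]
      ring
    have hleft : loEnd (x i + x j) + l * pairWidth i j x -
        (loEnd (y i + y j) + l * pairWidth i j y) = a + l * (b - a) := by
      rw [pairWidth, pairWidth, ha, hb]
      ring
    simp only [pairStep, sqDist_setPair x y hij, hright, hleft, ← hK]
    ring
  rw [← ofReal_integral_eq_lintegral_ofReal _ (.of_forall fun _ => sqDist_nonneg _ _)]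
  · simp only [hstep]
    rw [integral_Icc_eq_integral_Ioc, ← intervalIntegral.integral_of_le zero_le_one,
      integral_sub_mul_sub_sq, hsum]
    exact ENNReal.ofReal_le_ofReal (by linarith)
  · simp only [hstep]
    exact (Continuous.continuousOn (by fun_prop)).integrableOn_Icc

end FirstStage

section Contraction

variable {n : ℕ}

theorem measurable_sqDist_pairStep (x y : Fin n → ℝ) :
    Measurable fun u => sqDist (pairStep x u) (pairStep y u) := by
  have h := measurable_uncurry_pairStep (ι := Fin n)
  have hx : Measurable (pairStep x) := h.comp measurable_prodMk_left
  have hy : Measurable (pairStep y) := h.comp measurable_prodMk_left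
  unfold sqDist
  fun_prop

variable [n.AtLeastTwo]

theorem inv_card_mul_sum_pairsF_le {d : Fin n → ℝ} (hd : ∑ k, d k = 0) :
    ((pairsF n).card : ℝ)⁻¹ * ∑ e ∈ pairsF n,
        (∑ k, d k ^ 2 - d e.1 ^ 2 - d e.2 ^ 2 + 2 / 3 * (d e.1 + d e.2) ^ 2) ≤
      (1 - 2 / (3 * n)) * ∑ k, d k ^ 2 := by
  have hn : (2 : ℝ) ≤ n := Nat.ofNat_le_cast.2 Nat.AtLeastTwo.prop
  set S := ∑ k, d k ^ 2 with hS_def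
  have hS : 0 ≤ S := Finset.sum_nonneg fun _ _ => sq_nonneg _
  have htwo := two_mul_sum_pairsF
    (fun i j => S - d i ^ 2 - d j ^ 2 + 2 / 3 * (d i + d j) ^ 2) fun i j => by ring
  have hall : ∑ i, ∑ j, (S - d i ^ 2 - d j ^ 2 + 2 / 3 * (d i + d j) ^ 2) =
      (n ^ 2 - 2 / 3 * n) * S := by
    have hterm : ∀ i j, S - d i ^ 2 - d j ^ 2 + 2 / 3 * (d i + d j) ^ 2 =
        S - 1 / 3 * d i ^ 2 - 1 / 3 * d j ^ 2 + 4 / 3 * (d i * d j) := fun i j => by ring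
    simp only [hterm, Finset.sum_add_distrib, Finset.sum_sub_distrib, ← Finset.mul_sum, hd,
      mul_zero, Finset.sum_const_zero, Finset.sum_const, Finset.card_univ, Fintype.card_fin,
      nsmul_eq_mul, ← hS_def]
    ring
  have hdiag : ∑ i, (S - d i ^ 2 - d i ^ 2 + 2 / 3 * (d i + d i) ^ 2) = (n + 2 / 3) * S := by
    have hterm : ∀ i, S - d i ^ 2 - d i ^ 2 + 2 / 3 * (d i + d i) ^ 2 = S + 2 / 3 * d i ^ 2 :=
      fun i => by ring
    simp only [hterm, Finset.sum_add_distrib, ← Finset.mul_sum, Finset.sum_const,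
      Finset.card_univ, Fintype.card_fin, nsmul_eq_mul, ← hS_def]
    ring
  rw [card_pairsF, inv_mul_le_iff₀ (by nlinarith)]
  have hcoef : n * (n - 1) / 2 * ((1 - 2 / (3 * n)) * S) = (n - 1) * (n - 2 / 3) / 2 * S := by
    field_simp
  rw [hcoef]
  linarith

theorem lintegral_sqDist_pairStep_driveM_le {x y : Fin n → ℝ} (hx : x ∈ slice (Fin n))
    (hy : y ∈ slice (Fin n)) :
    ∫⁻ u, ENNReal.ofReal (sqDist (pairStep x u) (pairStep y u)) ∂driveM n ≤
      ENNReal.ofReal (1 - 2 / (3 * n)) * ENNReal.ofReal (sqDist x y) := by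
  have hsum : ∑ k, (x k - y k) = 0 := by rw [Finset.sum_sub_distrib, hx.2, hy.2, sub_self]
  have hpair : ∀ e ∈ pairsF n, 0 ≤ sqDist x y - (x e.1 - y e.1) ^ 2 - (x e.2 - y e.2) ^ 2 +
      2 / 3 * (x e.1 - y e.1 + (x e.2 - y e.2)) ^ 2 := fun e he => by
    have h := Finset.add_le_sum (fun k _ => sq_nonneg (x k - y k)) (Finset.mem_univ e.1)
      (Finset.mem_univ e.2) (ne_of_mem_pairsF he)
    rw [sqDist]
    nlinarith [sq_nonneg (x e.1 - y e.1 + (x e.2 - y e.2))]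
  rw [driveM, lintegral_prod _ (measurable_sqDist_pairStep x y).ennreal_ofReal.aemeasurable]
  refine (lintegral_mono_ae ((ae_unifOn_mem _).mono fun e he =>
    lintegral_sqDist_pairStep_le x y (ne_of_mem_pairsF he))).trans ?_
  rw [lintegral_unifOn_ofReal (pairsF_nonempty n) hpair, ← ENNReal.ofReal_mul' (sqDist_nonneg _ _)]
  exact ENNReal.ofReal_le_ofReal (inv_card_mul_sum_pairsF_le hsum)

theorem gibbsOp_le_gibbsOp_add {g h : (Fin n → ℝ) → ENNReal} (hh : Measurable h) {b c : ENNReal}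
    (hgh : ∀ ⦃x⦄, x ∈ slice (Fin n) → ∀ ⦃y⦄, y ∈ slice (Fin n) →
      g x ≤ h y + (c * ENNReal.ofReal (sqDist x y) + b))
    {x y : Fin n → ℝ} (hx : x ∈ slice (Fin n)) (hy : y ∈ slice (Fin n)) :
    gibbsOp n g x ≤ gibbsOp n h y +
      (c * ENNReal.ofReal (1 - 2 / (3 * n)) * ENNReal.ofReal (sqDist x y) + b) := by
  have hdist := (measurable_sqDist_pairStep x y).ennreal_ofReal
  have hstep : Measurable fun u => h (pairStep y u) :=
    hh.comp (measurable_uncurry_pairStep.comp measurable_prodMk_left)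
  calc gibbsOp n g x
      ≤ ∫⁻ u, h (pairStep y u) +
          (c * ENNReal.ofReal (sqDist (pairStep x u) (pairStep y u)) + b) ∂driveM n := by
        refine lintegral_mono_ae ((ae_driveM n).mono fun u hu => ?_)
        exact hgh (pairStep_mem_slice hx hu.1 hu.2) (pairStep_mem_slice hy hu.1 hu.2)
    _ = gibbsOp n h y +
          (c * ∫⁻ u, ENNReal.ofReal (sqDist (pairStep x u) (pairStep y u)) ∂driveM n + b) := by
        rw [lintegral_add_left hstep, lintegral_add_right _ measurable_const,
          lintegral_const_mul _ hdist, lintegral_const, measure_univ, mul_one]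
        rfl
    _ ≤ _ := by
        rw [mul_assoc]
        gcongr
        exact lintegral_sqDist_pairStep_driveM_le hx hy

theorem gibbsOp_iterate_le_gibbsOp_iterate_add {g h : (Fin n → ℝ) → ENNReal} (hh : Measurable h)
    {b c : ENNReal}
    (hgh : ∀ ⦃x⦄, x ∈ slice (Fin n) → ∀ ⦃y⦄, y ∈ slice (Fin n) →
      g x ≤ h y + (c * ENNReal.ofReal (sqDist x y) + b))
    (T : ℕ) ⦃x : Fin n → ℝ⦄ (hx : x ∈ slice (Fin n)) ⦃y : Fin n → ℝ⦄ (hy : y ∈ slice (Fin n)) :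
    (gibbsOp n)^[T] g x ≤ (gibbsOp n)^[T] h y +
      (c * ENNReal.ofReal (1 - 2 / (3 * n)) ^ T * ENNReal.ofReal (sqDist x y) + b) := by
  induction T generalizing x y with
  | zero => simpa using hgh hx hy
  | succ T ih =>
    rw [Function.iterate_succ_apply', Function.iterate_succ_apply', pow_succ, ← mul_assoc]
    exact gibbsOp_le_gibbsOp_add (measurable_gibbsOp_iterate hh T) ih hx hy

theorem DominatedOff.gibbsOp_iterate_le {g h : (Fin n → ℝ) → ENNReal} {c : ENNReal}
    (hgh : DominatedOff Finset.univ c g h) (hh : Measurable h) (T : ℕ) {x y : Fin n → ℝ}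
    (hx : x ∈ slice (Fin n)) (hy : y ∈ slice (Fin n)) :
    (gibbsOp n)^[T] g x ≤ (gibbsOp n)^[T] h y +
      c * ENNReal.ofReal (2 * n * Real.exp (-(T / (3 * n)))) := by
  have hn : (2 : ℝ) ≤ n := Nat.ofNat_le_cast.2 Nat.AtLeastTwo.prop
  set ρ := Real.exp (-(T / (3 * n))) with hρ
  have hρ₀ : 0 < ρ := Real.exp_pos _
  have hrate : (0 : ℝ) ≤ 1 - 2 / (3 * n) := by
    rw [sub_nonneg, div_le_one (by positivity)]
    linarith
  have hpow : (1 - 2 / (3 * n : ℝ)) ^ T ≤ ρ ^ 2 := by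
    refine (one_sub_pow_le_exp_neg_mul (sub_nonneg.1 hrate) T).trans_eq ?_
    rw [hρ, ← Real.exp_nat_mul]
    congr 1
    push_cast
    field_simp
  have hbound := gibbsOp_iterate_le_gibbsOp_iterate_add hh
    (c := c * ENNReal.ofReal (4 * ρ)⁻¹) (b := c * ENNReal.ofReal (n * ρ))
    (fun u hu v hv => (hgh hu hv fun k hk => absurd (Finset.mem_univ k) hk).trans ?_) T hx hy
  · refine hbound.trans (add_le_add_right ?_ _)
    rw [mul_assoc c, mul_assoc c, ← mul_add, ← ENNReal.ofReal_pow hrate,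
      ← ENNReal.ofReal_mul (by positivity), ← ENNReal.ofReal_mul (by positivity),
      ← ENNReal.ofReal_add (mul_nonneg (by positivity) (sqDist_nonneg _ _)) (by positivity)]
    gcongr
    calc (4 * ρ)⁻¹ * (1 - 2 / (3 * n)) ^ T * sqDist x y + n * ρ
        ≤ (4 * ρ)⁻¹ * ρ ^ 2 * (4 * n) + n * ρ := by
          have hdist : sqDist x y ≤ 4 * n := by simpa using sqDist_le hx hy
          have := sqDist_nonneg x y
          gcongr
      _ = 2 * n * ρ := by
          field_simp
          ring
  · rw [mul_assoc c, ← mul_add, ← ENNReal.ofReal_mul (by positivity),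
      ← ENNReal.ofReal_add (mul_nonneg (by positivity) (sqDist_nonneg _ _)) (by positivity)]
    gcongr
    simpa using l1Dist_le u v hρ₀

end Contraction

section Mixing

variable {n : ℕ} [n.AtLeastTwo]

theorem lintegral_gibbsOp {f : (Fin n → ℝ) → ENNReal} (hf : Measurable f) :
    ∫⁻ x, gibbsOp n f x ∂uniformSlice n = ∫⁻ x, f x ∂uniformSlice n := by
  have hm : Measurable fun p : (Fin n → ℝ) × (Fin n × Fin n) => resample p.2 f p.1 :=
    measurable_from_prod_countable_left fun e => measurable_resample e hf
  simp only [gibbsOp_apply hf]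
  rw [lintegral_lintegral_swap hm.aemeasurable, lintegral_congr_ae ((ae_unifOn_mem _).mono
    fun e he => lintegral_resample (ne_of_mem_pairsF he) hf),
    lintegral_const, measure_univ, mul_one]

theorem lintegral_gibbsOp_iterate {f : (Fin n → ℝ) → ENNReal} (hf : Measurable f) (T : ℕ) :
    ∫⁻ x, (gibbsOp n)^[T] f x ∂uniformSlice n = ∫⁻ x, f x ∂uniformSlice n := by
  induction T with
  | zero => rfl
  | succ T ih =>
    rw [Function.iterate_succ_apply', lintegral_gibbsOp (measurable_gibbsOp_iterate hf T), ih]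

theorem gibbsOp_iterate_add_le {η : ℝ} (hη : 0 < η) {f : (Fin n → ℝ) → ENNReal}
    (hf : Measurable f) (hf₁ : ∀ z, f z ≤ 1) (T₁ T₂ : ℕ) {x : Fin n → ℝ}
    (hx : x ∈ slice (Fin n)) :
    (gibbsOp n)^[T₁ + T₂] f x ≤ ∫⁻ y, f y ∂uniformSlice n +
      ENNReal.ofReal (n * (2 * η) + n ^ 2 * Real.exp (-(T₂ / n)) +
        n * η⁻¹ * (2 * n * Real.exp (-(T₁ / (3 * n))))) := by
  obtain ⟨D, hD, hD_le, hdom⟩ := exists_dominatedOff_univ_gibbsOp_iterate hη hf hf₁ T₂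
  have hg := measurable_gibbsOp_iterate hf T₂
  set ε := n * (ENNReal.ofReal η)⁻¹ * ENNReal.ofReal (2 * n * Real.exp (-(T₁ / (3 * n)))) with hε
  calc (gibbsOp n)^[T₁ + T₂] f x
      = ∫⁻ _y, (gibbsOp n)^[T₁] ((gibbsOp n)^[T₂] f) x ∂uniformSlice n := by
        rw [lintegral_const, measure_univ, mul_one, Function.iterate_add_apply]
    _ ≤ ∫⁻ y, (gibbsOp n)^[T₁] ((gibbsOp n)^[T₂] f + D) y + ε ∂uniformSlice n :=
        lintegral_mono_ae ((ae_mem_slice n).mono fun y hy =>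
          hdom.gibbsOp_iterate_le (hg.add hD) T₁ hx hy)
    _ = ∫⁻ y, f y ∂uniformSlice n + (∫⁻ y, D y ∂uniformSlice n + ε) := by
        rw [lintegral_add_right _ measurable_const, lintegral_gibbsOp_iterate (hg.add hD),
          lintegral_const, measure_univ, mul_one, ← lintegral_gibbsOp_iterate hf T₂, ← add_assoc]
        exact congrArg (· + ε) (lintegral_add_left hg D)
    _ ≤ _ := by
        have hwidth : ENNReal.ofReal (n * (2 * η)) = n * (2 * ENNReal.ofReal η) := by
          simp [ENNReal.ofReal_mul]
        have hinv : ENNReal.ofReal (n * η⁻¹) = n * (ENNReal.ofReal η)⁻¹ := by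
          rw [ENNReal.ofReal_mul n.cast_nonneg, ENNReal.ofReal_natCast,
            ENNReal.ofReal_inv_of_pos hη]
        rw [ENNReal.ofReal_add (by positivity) (by positivity),
          ENNReal.ofReal_add (by positivity) (by positivity), hwidth,
          ENNReal.ofReal_mul (p := n * η⁻¹) (by positivity), hinv, ← hε]
        gcongr

theorem tvDist_lawM_le {x : Fin n × Fin 2 → ℝ} (hx : x ∈ MSet n) (T₁ T₂ : ℕ) :
    tvDist (lawM n x (T₁ + T₂)) (UM n) ≤
      4 * n * √(n * Real.exp (-(T₁ / (3 * n)))) + n ^ 2 * Real.exp (-(T₂ / n)) := by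
  have hn : 0 < (n : ℝ) := Nat.cast_pos.2 (NeZero.pos n)
  obtain ⟨z, hz, rfl⟩ := image_ofFirstCol_slice (n := n) ▸ hx
  have hcol := (isometry_ofFirstCol (n := n)).continuous.measurable
  set ρ := Real.exp (-(T₁ / (3 * n)))
  have hη : 0 < √(n * ρ) := Real.sqrt_pos.2 (by positivity)
  have hbound : n * (2 * √(n * ρ)) + n ^ 2 * Real.exp (-(T₂ / n)) +
      n * (√(n * ρ))⁻¹ * (2 * n * ρ) = 4 * n * √(n * ρ) + n ^ 2 * Real.exp (-(T₂ / n)) := by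
    have hsq : n * ρ / √(n * ρ) = √(n * ρ) := Real.div_sqrt
    linear_combination 2 * n * hsq
  have : IsProbabilityMeasure (UM n) :=
    map_ofFirstCol_uniformSlice (n := n) ▸ Measure.isProbabilityMeasure_map hcol.aemeasurable
  refine tvDist_le (by positivity) fun A hA => ?_
  have hind : Measurable (A.indicator (1 : (Fin n × Fin 2 → ℝ) → ENNReal)) :=
    measurable_one.indicator hA
  rw [← lintegral_indicator_one hA, lintegral_lawM_ofFirstCol z _ hind,
    ← lintegral_indicator_one hA, ← map_ofFirstCol_uniformSlice, lintegral_map hind hcol, ← hbound]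
  exact gibbsOp_iterate_add_le hη (hind.comp hcol)
    (fun y => Set.indicator_le_self' (fun _ _ => zero_le) _) T₁ T₂ hz

end Mixing

section Rate

variable {n T : ℕ} {C : ℝ}

theorem exp_neg_mul_div_le (hn : 0 < n) (hT : C * n * Real.log n ≤ T) {q : ℝ} (hq : 0 ≤ q) :
    Real.exp (-(q * (T / n))) ≤ (n : ℝ) ^ (-(q * C)) := by
  have hn' : (0 : ℝ) < n := Nat.cast_pos.2 hn
  have hdiv : C * Real.log n ≤ T / n := (le_div_iff₀ hn').2 (by linarith)
  rw [Real.rpow_def_of_pos hn']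
  exact Real.exp_le_exp.2 (by linarith [mul_le_mul_of_nonneg_left hdiv hq])

theorem mul_sqrt_exp_le (hn : 0 < n) (hT : C * n * Real.log n ≤ T) {s : ℝ}
    (hs : 5 / 6 * (T : ℝ) ≤ s) :
    n * √(n * Real.exp (-(s / (3 * n)))) ≤ (n : ℝ) ^ (3 / 2 - 5 / 36 * C) := by
  have hn' : (0 : ℝ) < n := Nat.cast_pos.2 hn
  have hexp : Real.exp (-(s / (3 * n)) / 2) ≤ (n : ℝ) ^ (-(5 / 36 * C)) := by
    refine le_trans (Real.exp_le_exp.2 ?_) (exp_neg_mul_div_le hn hT (by norm_num))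
    rw [neg_div, neg_le_neg_iff, ← mul_div_assoc, div_div, div_le_div_iff₀ hn' (by positivity)]
    linarith [mul_le_mul_of_nonneg_right hs hn'.le]
  calc n * √(n * Real.exp (-(s / (3 * n)))) = n * √n * Real.exp (-(s / (3 * n)) / 2) := by
        rw [Real.sqrt_mul hn'.le, Real.exp_half, mul_assoc]
    _ ≤ n * √n * (n : ℝ) ^ (-(5 / 36 * C)) := by gcongr
    _ = (n : ℝ) ^ (3 / 2 - 5 / 36 * C) := by
        rw [Real.sqrt_eq_rpow, ← Real.rpow_one_add' hn'.le (by norm_num), ← Real.rpow_add hn']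
        norm_num [sub_eq_add_neg]

theorem sq_mul_exp_le (hn : 0 < n) (hT : C * n * Real.log n ≤ T) {s : ℝ}
    (hs : 1 / 6 * (T : ℝ) - 1 ≤ s) :
    n ^ 2 * Real.exp (-(s / n)) ≤ 3 * (n : ℝ) ^ (2 - C / 6) := by
  have hn' : (0 : ℝ) < n := Nat.cast_pos.2 hn
  have hone : (1 : ℝ) / n ≤ 1 := (div_le_one hn').2 (Nat.one_le_cast.2 hn)
  have hs' : 1 / 6 * (T / n : ℝ) - 1 / n ≤ s / n := by
    rw [← mul_div_assoc, ← sub_div]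
    gcongr
  calc n ^ 2 * Real.exp (-(s / n)) ≤ n ^ 2 * Real.exp (1 + -(1 / 6 * (T / n))) := by
        gcongr
        linarith
    _ ≤ n ^ 2 * (3 * (n : ℝ) ^ (-(1 / 6 * C))) := by
        rw [Real.exp_add]
        gcongr
        · exact Real.exp_one_lt_three.le
        · exact exp_neg_mul_div_le hn hT (by norm_num)
    _ = 3 * (n : ℝ) ^ (2 - C / 6) := by
        rw [mul_left_comm, ← Real.rpow_natCast, ← Real.rpow_add hn']
        congr 2
        push_cast
        ring

theorem four_mul_rpow_add_three_mul_rpow_le (hn : 1 ≤ (n : ℝ)) (hC : 23 ≤ C) :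
    4 * (n : ℝ) ^ (3 / 2 - 5 / 36 * C) + 3 * (n : ℝ) ^ (2 - C / 6) ≤
      11 * (n : ℝ) ^ (-C / 11 + 19 / 44) := by
  have hexp : ∀ p : ℝ, p ≤ -C / 11 + 19 / 44 → (n : ℝ) ^ p ≤ (n : ℝ) ^ (-C / 11 + 19 / 44) :=
    fun p hp => Real.rpow_le_rpow_of_exponent_le hn hp
  linarith [hexp (3 / 2 - 5 / 36 * C) (by linarith), hexp (2 - C / 6) (by linarith),
    Real.rpow_nonneg n.cast_nonneg (-C / 11 + 19 / 44)]

end Rate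

theorem gibbs_sampler_narrow_matrices_upper_bound_general {n T : ℕ} {C : ℝ} (hn : 2 ≤ n)
    {x : Fin n × Fin 2 → ℝ} (hx : x ∈ MSet n) (hT : C * n * Real.log n ≤ T) :
    tvDist (lawM n x T) (UM n) ≤
      4 * (n : ℝ) ^ (3 / 2 - 5 / 36 * C) + 3 * (n : ℝ) ^ (2 - C / 6) := by
  have : n.AtLeastTwo := ⟨hn⟩
  have hn₀ : 0 < n := two_pos.trans_le hn
  -- The first stage, whose error decays only like `exp (-t / (6 n))`, gets five sixths of the time.
  refine (Nat.sub_add_cancel (Nat.div_le_self T 6) ▸ tvDist_lawM_le hx (T - T / 6) (T / 6)).trans ?_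
  have hT₁ : 5 / 6 * (T : ℝ) ≤ (T - T / 6 : ℕ) := by
    have : 5 * T ≤ 6 * (T - T / 6) := by omega
    have : (5 * T : ℝ) ≤ 6 * (T - T / 6 : ℕ) := by exact_mod_cast this
    linarith
  have hT₂ : 1 / 6 * (T : ℝ) - 1 ≤ (T / 6 : ℕ) := by
    have : T ≤ 6 * (T / 6) + 6 := by omega
    have : (T : ℝ) ≤ 6 * (T / 6 : ℕ) + 6 := by exact_mod_cast this
    linarith
  rw [mul_assoc]
  exact add_le_add (mul_le_mul_of_nonneg_left (mul_sqrt_exp_le hn₀ hT hT₁) zero_le_four)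
    (sq_mul_exp_le hn₀ hT hT₂)

/-- Convergence rate (upper bound) for the Gibbs sampler on narrow matrices. -/
theorem gibbs_sampler_narrow_matrices_upper_bound
    (n : ℕ) (C a : ℝ) (hC : 23 < C) (haC : a = 2 / 11 * (C + 18.25))
    (hn1 : max 4096 (2 / 11 * C + 75 / 11) < (n : ℝ))
    (hn2 : 6 * (2 * a - 13) * (a - 7) / (2 * a - 15) < (n : ℝ) / Real.log n)
    (x : Fin n × Fin 2 → ℝ) (hx : x ∈ MSet n)
    (T : ℕ) (hT : C * n * Real.log n < (T : ℝ)) :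
    tvDist (lawM n x T) (UM n) ≤ 11 * (n : ℝ) ^ (-C / 11 + 19 / 44) := by
  have hn : (4096 : ℝ) < n := (le_max_left _ _).trans_lt hn1
  exact (gibbs_sampler_narrow_matrices_upper_bound_general
    (by exact_mod_cast (by linarith : (2 : ℝ) ≤ n)) hx hT.le).trans
    (four_mul_rpow_add_three_mul_rpow_le (by linarith) hC.le)

end
end

section
/- Let n > 4 and ε > 0 satisfy n/log n > 3(1+2ε)(1/2+2ε)/ε. Let E_1, E_2, … be i.i.d. uniformly random unordered pairs of distinct elements of {1,…,n}, and let τ be the smallest t such that the graph with vertex set {1,…,n} and edge set {E_1,…,E_t} is connected. Then P[τ > (1/2 + 2ε)·n·log n] ≤ 2·n^{−ε}. -/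
open MeasureTheory

noncomputable section

/-!
If `n ^ ε ≤ 2`, the bound is at least `1`. Otherwise sum over the possible unions of components
`S` with `1 ≤ k = #S ≤ n / 2`: a uniform pair joins `S` to its complement with probability
`q = 2 k (n - k) / (n (n - 1))`, so the expected number of such `S` that none of the `T` pairs
joins to its complement is at most `∑ k, n.choose k * exp (-q T)`.

Put `a = k (n - k) / (n - 1)`. Since `T ≥ (1 / 2 + 2 ε) n log n - 1`, the exponent `q T` is at least
`a log n + 4 a (ε log n - 1 / (2 n))`. The first summand offsets the binomial coefficient:
`n ^ (k - a) = (n ^ ((k - 1) / (n - 1))) ^ k ≤ k ^ k` by Bernoulli's inequality, whence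
`n.choose k * n ^ (-a) ≤ k ^ k / k! = O(exp k)`. In the second, `4 a ≥ 2 k + 1`, which yields, up to
a constant factor, `n ^ (-ε)` times `n ^ (-2 k ε) ≤ 4 ^ (-k)`. Since `exp 1 < 4`, the sum over `k`
is bounded by a convergent geometric series.
-/

section Uniform

open Finset

variable {α : Type*} [MeasurableSpace α]

lemma unifOn_apply [MeasurableSingletonClass α] (s : Finset α) (A : Set α)
    [DecidablePred (· ∈ A)] : unifOn s A = (#{a ∈ s | a ∈ A} : ENNReal) / #s := by
  simp [unifOn, Set.indicator_apply, ENNReal.div_eq_inv_mul]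

lemma unifOn_univ_le_one (s : Finset α) : unifOn s Set.univ ≤ 1 := by
  simp [unifOn, ENNReal.inv_mul_le_one]

instance (s : Finset α) : IsFiniteMeasure (unifOn s) :=
  ⟨(unifOn_univ_le_one s).trans_lt ENNReal.one_lt_top⟩

lemma pi_unifOn_le_one {ι : Type*} [Fintype ι] (s : Finset α) (A : Set (ι → α)) :
    Measure.pi (fun _ => unifOn s) A ≤ 1 := by
  refine (measure_mono A.subset_univ).trans ?_
  rw [Measure.pi_univ]
  exact prod_le_one' fun _ _ => unifOn_univ_le_one s

end Uniform

section Cuts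

open Finset

/-- The pairs that do not join `S` to its complement: a graph has `S` as a union of components
when all its edges lie in this set. -/
def nonCrossing {V : Type*} (S : Finset V) : Set (V × V) := {p | p.1 ∈ S ↔ p.2 ∈ S}

/-- The probability that a uniform pair of distinct elements of `{1, …, n}`, `2 ≤ n`, joins a given
set of `k ≤ n` elements to its complement. -/
def crossingProb (n k : ℕ) : ℝ := 2 * k * (n - k) / (n * (n - 1))

/-- The graph whose edges are the drawn pairs `ω s`; the orientation of a pair is forgotten
and pairs `(a, a)` are ignored. -/
def drawnGraph {ι V : Type*} (ω : ι → V × V) : SimpleGraph V :=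
  SimpleGraph.fromRel fun a b => ∃ s, ω s = (a, b) ∨ ω s = (b, a)

instance {V : Type*} [DecidableEq V] (S : Finset V) : DecidablePred (· ∈ nonCrossing S) :=
  fun p => inferInstanceAs (Decidable (p.1 ∈ S ↔ p.2 ∈ S))

lemma two_mul_card_filter_pairsF {n : ℕ} (r : Fin n → Fin n → Prop) [DecidableRel r]
    (symm : ∀ a b, r a b → r b a) (irrefl : ∀ a, ¬ r a a) :
    2 * #{p ∈ pairsF n | r p.1 p.2} = #{p : Fin n × Fin n | r p.1 p.2} := by
  have swap : #{p : Fin n × Fin n | r p.1 p.2 ∧ ¬ p.1 < p.2} = #{p ∈ pairsF n | r p.1 p.2} := by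
    refine card_equiv (Equiv.prodComm _ _) fun ⟨a, b⟩ => ?_
    have : r a b → a ≠ b := by rintro h rfl; exact irrefl a h
    simp only [pairsF, mem_filter, mem_univ, true_and, Equiv.prodComm_apply, Prod.swap_prod_mk]
    grind
  rw [← card_filter_add_card_filter_not (s := {p : Fin n × Fin n | r p.1 p.2})
      (fun p => p.1 < p.2), filter_filter, filter_filter, swap, pairsF, filter_filter, two_mul]
  simp only [and_comm]

lemma two_mul_card_pairsF (n : ℕ) : 2 * #(pairsF n) = n * (n - 1) := by
  have h := two_mul_card_filter_pairsF (n := n) (· ≠ ·) (fun _ _ => Ne.symm) (by simp)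
  rw [filter_true_of_mem (s := pairsF n) (by simp +contextual [pairsF, ne_of_lt])] at h
  have offDiag : ({p : Fin n × Fin n | p.1 ≠ p.2} : Finset _) = univ.offDiag := by ext; simp
  rw [h, offDiag, offDiag_card, card_univ, Fintype.card_fin, Nat.mul_sub_one]

lemma card_filter_notMem_nonCrossing_pairsF {n : ℕ} (S : Finset (Fin n)) :
    #{p ∈ pairsF n | p ∉ nonCrossing S} = #S * (n - #S) := by
  have h := two_mul_card_filter_pairsF (fun a b => ¬ (a ∈ S ↔ b ∈ S)) (by tauto) (by tauto)
  have split : ({p : Fin n × Fin n | ¬ (p.1 ∈ S ↔ p.2 ∈ S)} : Finset _) = S ×ˢ Sᶜ ∪ Sᶜ ×ˢ S := by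
    ext p
    simp only [mem_filter, mem_univ, true_and, mem_union, mem_product, mem_compl]
    tauto
  have disj : Disjoint (S ×ˢ Sᶜ) (Sᶜ ×ˢ S) := disjoint_product.2 (.inl disjoint_compl_right)
  rw [split, card_union_of_disjoint disj, card_product, card_product, card_compl,
    Fintype.card_fin, mul_comm (n - #S), ← two_mul] at h
  exact Nat.eq_of_mul_eq_mul_left two_pos h

lemma unifOn_pairsF_nonCrossing {n : ℕ} (hn : 1 < n) (S : Finset (Fin n)) :
    unifOn (pairsF n) (nonCrossing S) = ENNReal.ofReal (1 - crossingProb n #S) := by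
  have total := card_filter_add_card_filter_not (s := pairsF n) (· ∈ nonCrossing S)
  rw [card_filter_notMem_nonCrossing_pairsF] at total
  have pairs := two_mul_card_pairsF n
  rw [unifOn_apply]
  rify [hn.le, card_finset_fin_le S] at total pairs
  have hn' : (1 : ℝ) < n := by exact_mod_cast hn
  have pairs_pos : (0 : ℝ) < #(pairsF n) := by nlinarith
  rw [← ENNReal.ofReal_natCast, ← ENNReal.ofReal_natCast, ← ENNReal.ofReal_div_of_pos pairs_pos,
    crossingProb, ← pairs, ← total]
  rw [← total] at pairs_pos
  congr 1
  field_simp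
  ring

lemma exists_nonCrossing_of_not_connected {V : Type*} [Fintype V] [Nonempty V]
    {G : SimpleGraph V} (hG : ¬ G.Connected) :
    ∃ S : Finset V, 1 ≤ #S ∧ #S ≤ Fintype.card V / 2 ∧
      ∀ a b, G.Adj a b → (a, b) ∈ nonCrossing S := by
  classical
  obtain ⟨u, v, huv⟩ : ∃ u v, ¬ G.Reachable u v := by
    by_contra! h
    exact hG ⟨h⟩
  let S : Finset V := {w | G.Reachable u w}
  have adj (a b) (hab : G.Adj a b) : a ∈ S ↔ b ∈ S := by
    simp only [S, mem_filter, mem_univ, true_and]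
    exact ⟨fun h => h.trans hab.reachable, fun h => h.trans hab.symm.reachable⟩
  have hS : 1 ≤ #S := card_pos.2 ⟨u, by simp [S]⟩
  have hSc : 1 ≤ #Sᶜ := card_pos.2 ⟨v, by simpa [S] using huv⟩
  have hcard : #S + #Sᶜ = Fintype.card V := card_add_card_compl S
  by_cases hle : #S ≤ Fintype.card V / 2
  · exact ⟨S, hS, hle, adj⟩
  · exact ⟨Sᶜ, hSc, by omega, fun a b hab => by simp [nonCrossing, adj a b hab]⟩

lemma setOf_not_connected_drawnGraph_subset {ι V : Type*} [Fintype V] [Nonempty V] :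
    {ω : ι → V × V | ¬ (drawnGraph ω).Connected} ⊆
      ⋃ k ∈ Icc 1 (Fintype.card V / 2), ⋃ S ∈ powersetCard k (univ : Finset V),
        Set.univ.pi fun _ => nonCrossing S := by
  intro ω hω
  obtain ⟨S, hS, hSV, hadj⟩ := exists_nonCrossing_of_not_connected hω
  simp only [Set.mem_iUnion, mem_Icc, mem_powersetCard, Set.mem_univ_pi]
  refine ⟨#S, ⟨hS, hSV⟩, S, ⟨subset_univ S, rfl⟩, fun s => ?_⟩
  by_cases hs : (ω s).1 = (ω s).2
  · simp [nonCrossing, hs]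
  · exact hadj _ _ ((SimpleGraph.fromRel_adj _ _ _).2 ⟨hs, .inl ⟨s, .inl rfl⟩⟩)

lemma measure_not_connected_drawnGraph_le {n : ℕ} (hn : n ≠ 0) (ι : Type*) [Fintype ι] :
    Measure.pi (fun _ : ι => unifOn (pairsF n)) {ω | ¬ (drawnGraph ω).Connected} ≤
      ENNReal.ofReal (∑ k ∈ Icc 1 (n / 2),
        n.choose k * Real.exp (-(crossingProb n k * Fintype.card ι))) := by
  have : Nonempty (Fin n) := Fin.pos_iff_nonempty.1 (Nat.pos_of_ne_zero hn)
  refine (measure_mono setOf_not_connected_drawnGraph_subset).trans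
    ((measure_biUnion_finset_le _ _).trans ?_)
  rw [Fintype.card_fin, ENNReal.ofReal_sum_of_nonneg fun k _ => by positivity]
  refine sum_le_sum fun k hk => (measure_biUnion_finset_le _ _).trans ?_
  have miss (S : Finset (Fin n)) (hS : S ∈ powersetCard k univ) :
      Measure.pi (fun _ : ι => unifOn (pairsF n)) (Set.univ.pi fun _ => nonCrossing S) ≤
        ENNReal.ofReal (Real.exp (-(crossingProb n k * Fintype.card ι))) := by
    have hn : 1 < n := by have := mem_Icc.1 hk; omega
    rw [Measure.pi_pi, prod_const, card_univ, unifOn_pairsF_nonCrossing hn,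
      (mem_powersetCard.1 hS).2, ← neg_mul, mul_comm, Real.exp_nat_mul,
      ENNReal.ofReal_pow (Real.exp_nonneg _)]
    gcongr
    exact Real.one_sub_le_exp_neg _
  refine (sum_le_card_nsmul _ _ _ miss).trans_eq ?_
  rw [card_powersetCard, card_univ, Fintype.card_fin, nsmul_eq_mul,
    ENNReal.ofReal_mul (Nat.cast_nonneg _), ENNReal.ofReal_natCast]

end Cuts

section Estimates

open Finset

lemma pow_self_div_factorial_le {k : ℕ} (hk : 1 ≤ k) :
    (k : ℝ) ^ k / k.factorial ≤ 2 / 5 * Real.exp k := by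
  have stirling := Stirling.le_factorial_stirling k
  have sqrt_ge : 5 / 2 ≤ √(2 * Real.pi * k) := by
    refine Real.le_sqrt_of_sq_le ?_
    have : (1 : ℝ) ≤ k := by exact_mod_cast hk
    nlinarith [Real.pi_gt_d2]
  have bound : 5 / 2 * ((k : ℝ) / Real.exp 1) ^ k ≤ k.factorial :=
    le_trans (by gcongr) stirling
  rw [div_pow, ← Real.exp_nat_mul, mul_one, ← mul_div_assoc,
    div_le_iff₀ (Real.exp_pos _)] at bound
  rw [div_le_iff₀ (by positivity)]
  linarith

lemma rpow_sub_one_div_sub_one_le {x y : ℝ} (hy : 1 ≤ y) (hyx : y ≤ x) (hx : 1 < x) :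
    x ^ ((y - 1) / (x - 1)) ≤ y := by
  have hx' : 0 < x - 1 := sub_pos.2 hx
  have bernoulli := rpow_one_add_le_one_add_mul_self (s := x - 1) (p := (y - 1) / (x - 1))
    (by linarith) (div_nonneg (sub_nonneg.2 hy) hx'.le) ((div_le_one hx').2 (by linarith))
  rwa [div_mul_cancel₀ _ hx'.ne', add_sub_cancel, add_sub_cancel] at bernoulli

variable {n k : ℕ}

lemma crossingProb_nonneg (hkn : k ≤ n) (hn : 1 ≤ n) : 0 ≤ crossingProb n k := by
  rify at hkn hn
  exact div_nonneg (mul_nonneg (by positivity) (sub_nonneg.2 hkn))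
    (mul_nonneg (by positivity) (sub_nonneg.2 hn))

lemma choose_mul_rpow_neg_le (hk : 1 ≤ k) (hkn : k ≤ n) (hn : 1 < n) :
    n.choose k * (n : ℝ) ^ (-(n / 2 * crossingProb n k)) ≤ 2 / 5 * Real.exp k := by
  have hn' : (1 : ℝ) < n := by exact_mod_cast hn
  have hn₀ : (0 : ℝ) < n := by linarith
  have hn₁ : (n : ℝ) - 1 ≠ 0 := by linarith
  have exponent : k + -(n / 2 * crossingProb n k) = ((k : ℝ) - 1) / (n - 1) * k := by
    rw [crossingProb]
    field_simp
    ring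
  calc n.choose k * (n : ℝ) ^ (-(n / 2 * crossingProb n k))
      ≤ (n : ℝ) ^ k / k.factorial * (n : ℝ) ^ (-(n / 2 * crossingProb n k)) := by
        gcongr
        exact Nat.choose_le_pow_div k n
    _ = ((n : ℝ) ^ (((k : ℝ) - 1) / (n - 1))) ^ k / k.factorial := by
        rw [div_mul_eq_mul_div, ← Real.rpow_natCast, ← Real.rpow_natCast,
          ← Real.rpow_add hn₀, ← Real.rpow_mul hn₀.le, exponent]
    _ ≤ (k : ℝ) ^ k / k.factorial := by
        gcongr
        exact rpow_sub_one_div_sub_one_le (by exact_mod_cast hk) (by exact_mod_cast hkn) hn'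
    _ ≤ 2 / 5 * Real.exp k := pow_self_div_factorial_le hk

lemma two_mul_add_one_le_mul_crossingProb (hk : 1 ≤ k) (hkn : 2 * k ≤ n) :
    (2 * k + 1 : ℝ) ≤ 2 * n * crossingProb n k := by
  rify at hk hkn
  have hn₁ : (0 : ℝ) < n - 1 := by linarith
  have hn₀ : (0 : ℝ) < n := by linarith
  have : 2 * n * crossingProb n k = 4 * k * (n - k) / (n - 1) := by
    rw [crossingProb]
    field_simp
    ring
  rw [this, le_div_iff₀ hn₁]
  -- The difference of the two sides is `(2 k - 1) (n - 2 k) + 1`.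
  nlinarith [mul_nonneg (by linarith : (0 : ℝ) ≤ 2 * k - 1) (sub_nonneg.2 hkn)]

lemma exp_neg_mul_crossingProb_le (hk : 1 ≤ k) (hkn : 2 * k ≤ n) {u : ℝ} (hu : Real.log 2 ≤ u) :
    Real.exp (-(2 * n * crossingProb n k * (u - 1 / (2 * n)))) ≤
      Real.exp (-u) * (Real.exp (3 / 4) * (1 / 4) ^ k) := by
  have hn : (2 : ℝ) ≤ n := by exact_mod_cast (by omega : 2 ≤ n)
  have hc := two_mul_add_one_le_mul_crossingProb hk hkn
  have inv_le : 1 / (2 * n) ≤ (1 / 4 : ℝ) := by gcongr; linarith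
  have hu' : 0 ≤ u - 1 / (2 * n) := by linarith [Real.log_two_gt_d9]
  have loss : (2 * k + 1) * (1 / (2 * n)) ≤ (3 / 4 : ℝ) := by
    rify at hkn
    rw [mul_one_div, div_le_iff₀ (by positivity)]
    linarith
  have pow_eq : (1 / 4 : ℝ) ^ k = Real.exp (-(2 * k * Real.log 2)) := by
    rw [mul_comm (2 : ℝ), mul_assoc, ← mul_neg, Real.exp_nat_mul, Real.exp_neg, two_mul,
      Real.exp_add, Real.exp_log two_pos]
    norm_num
  rw [pow_eq, ← Real.exp_add, ← Real.exp_add, Real.exp_le_exp]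
  calc -(2 * n * crossingProb n k * (u - 1 / (2 * n)))
      ≤ -((2 * k + 1) * (u - 1 / (2 * n))) := by gcongr
    _ = -u + ((2 * k + 1) * (1 / (2 * n)) + -(2 * k * u)) := by ring
    _ ≤ -u + (3 / 4 + -(2 * k * Real.log 2)) := by gcongr

lemma choose_mul_exp_neg_crossingProb_le {ε T : ℝ} (hk : 1 ≤ k) (hkn : 2 * k ≤ n)
    (hε : Real.log 2 ≤ ε * Real.log n) (hT : (1 / 2 + 2 * ε) * n * Real.log n - 1 ≤ T) :
    n.choose k * Real.exp (-(crossingProb n k * T)) ≤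
      (n : ℝ) ^ (-ε) * (2 / 5 * Real.exp (3 / 4) * (Real.exp 1 / 4) ^ k) := by
  have hn₀ : (0 : ℝ) < n := by exact_mod_cast (by omega : 0 < n)
  have hc : 0 ≤ crossingProb n k := crossingProb_nonneg (by omega) (by omega)
  calc n.choose k * Real.exp (-(crossingProb n k * T))
      ≤ n.choose k *
          Real.exp (-(crossingProb n k * ((1 / 2 + 2 * ε) * n * Real.log n - 1))) := by gcongr
    _ = n.choose k * (n : ℝ) ^ (-(n / 2 * crossingProb n k)) *
          Real.exp (-(2 * n * crossingProb n k * (ε * Real.log n - 1 / (2 * n)))) := by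
        rw [mul_assoc (n.choose k : ℝ), Real.rpow_def_of_pos hn₀, ← Real.exp_add]
        congr 2
        field_simp
        ring
    _ ≤ 2 / 5 * Real.exp k *
          (Real.exp (-(ε * Real.log n)) * (Real.exp (3 / 4) * (1 / 4) ^ k)) := by
        exact mul_le_mul (choose_mul_rpow_neg_le hk (by omega) (by omega))
          (exp_neg_mul_crossingProb_le hk hkn hε) (by positivity) (by positivity)
    _ = (n : ℝ) ^ (-ε) * (2 / 5 * Real.exp (3 / 4) * (Real.exp 1 / 4) ^ k) := by
        rw [Real.rpow_def_of_pos hn₀, mul_neg, mul_comm ε, div_eq_mul_one_div (Real.exp 1),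
          mul_pow (Real.exp 1), ← Real.exp_nat_mul, mul_one]
        ring

lemma sum_Icc_geometric_le_two (N : ℕ) :
    ∑ k ∈ Icc 1 N, 2 / 5 * Real.exp (3 / 4) * (Real.exp 1 / 4) ^ k ≤ 2 := by
  have he : Real.exp 1 < 2.7183 := Real.exp_one_lt_d9.trans (by norm_num)
  have exp_le : Real.exp (3 / 4) ≤ 9 / 4 := by
    refine le_of_pow_le_pow_left₀ (n := 4) (by norm_num) (by norm_num) ?_
    calc Real.exp (3 / 4) ^ 4 = Real.exp 1 ^ 3 := by
          rw [← Real.exp_nat_mul, ← Real.exp_nat_mul]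
          norm_num
      _ ≤ 2.7183 ^ 3 := by gcongr
      _ ≤ (9 / 4) ^ 4 := by norm_num
  have geom : ∑ k ∈ Icc 1 N, (Real.exp 1 / 4) ^ k ≤ 20 / 9 := by
    refine (geom_sum_Ico_le_of_lt_one (n := N + 1) (by positivity) (by linarith)).trans ?_
    rw [pow_one, div_le_iff₀ (by linarith)]
    linarith
  calc ∑ k ∈ Icc 1 N, 2 / 5 * Real.exp (3 / 4) * (Real.exp 1 / 4) ^ k
      = 2 / 5 * Real.exp (3 / 4) * ∑ k ∈ Icc 1 N, (Real.exp 1 / 4) ^ k := (mul_sum ..).symm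
    _ ≤ 2 / 5 * (9 / 4) * (20 / 9) := by gcongr
    _ = 2 := by norm_num

lemma sum_choose_mul_exp_neg_crossingProb_le {ε T : ℝ} (hε : Real.log 2 ≤ ε * Real.log n)
    (hT : (1 / 2 + 2 * ε) * n * Real.log n - 1 ≤ T) :
    ∑ k ∈ Icc 1 (n / 2), n.choose k * Real.exp (-(crossingProb n k * T)) ≤
      2 * (n : ℝ) ^ (-ε) := by
  calc ∑ k ∈ Icc 1 (n / 2), n.choose k * Real.exp (-(crossingProb n k * T))
      ≤ ∑ k ∈ Icc 1 (n / 2),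
          (n : ℝ) ^ (-ε) * (2 / 5 * Real.exp (3 / 4) * (Real.exp 1 / 4) ^ k) := by
        refine sum_le_sum fun k hk => ?_
        rw [mem_Icc] at hk
        exact choose_mul_exp_neg_crossingProb_le hk.1 (by omega) hε hT
    _ = (∑ k ∈ Icc 1 (n / 2), 2 / 5 * Real.exp (3 / 4) * (Real.exp 1 / 4) ^ k) *
          (n : ℝ) ^ (-ε) := by rw [← mul_sum, mul_comm]
    _ ≤ 2 * (n : ℝ) ^ (-ε) := by
        gcongr
        exact sum_Icc_geometric_le_two _

lemma one_le_two_mul_rpow_neg {x ε : ℝ} (hx : 0 < x) (hε : ε * Real.log x ≤ Real.log 2) :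
    1 ≤ 2 * x ^ (-ε) := by
  rwa [Real.rpow_neg hx.le, ← div_eq_mul_inv, one_le_div (by positivity),
    ← Real.log_le_log_iff (by positivity) two_pos, Real.log_rpow hx]

end Estimates

theorem random_graph_connectivity_time_general (n : ℕ) (hn : n ≠ 0) (ε : ℝ) :
    (Measure.pi fun _ : Fin ⌊(1 / 2 + 2 * ε) * n * Real.log n⌋₊ => unifOn (pairsF n))
        {ω | ¬ (SimpleGraph.fromRel fun a b => ∃ s, ω s = (a, b) ∨ ω s = (b, a)).Connected} ≤
      ENNReal.ofReal (2 * (n : ℝ) ^ (-ε)) := by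
  rcases le_total (Real.log 2) (ε * Real.log n) with hε | hε
  · refine (measure_not_connected_drawnGraph_le hn _).trans (ENNReal.ofReal_le_ofReal ?_)
    rw [Fintype.card_fin]
    exact sum_choose_mul_exp_neg_crossingProb_le hε (Nat.sub_one_lt_floor _).le
  · have hn₀ : (0 : ℝ) < n := by positivity
    exact (pi_unifOn_le_one _ _).trans (ENNReal.one_le_ofReal.2 (one_le_two_mul_rpow_neg hn₀ hε))

/-- Connectivity time for the random graph process: if `E_1, E_2, …` are i.i.d. uniform
unordered pairs of distinct vertices, the probability that the graph made of the first
`⌊(1/2 + 2ε) n log n⌋` edges is still disconnected is at most `2 n^{-ε}`. -/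
theorem random_graph_connectivity_time
    (n : ℕ) (hn : 4 < n) (ε : ℝ) (hε : 0 < ε)
    (h : 3 * (1 + 2 * ε) * (1 / 2 + 2 * ε) / ε < (n : ℝ) / Real.log n) :
    (Measure.pi fun _ : Fin ⌊(1 / 2 + 2 * ε) * n * Real.log n⌋₊ => unifOn (pairsF n))
        {ω | ¬ (SimpleGraph.fromRel fun a b => ∃ s, ω s = (a, b) ∨ ω s = (b, a)).Connected} ≤
      ENNReal.ofReal (2 * (n : ℝ) ^ (-ε)) := by
  exact random_graph_connectivity_time_general n (by omega) ε

end
end
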